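/- (Gabriel's Theorem, part 1) Let k be an algebraically closed field. A finite connected quiver Q has only finitely many isomorphism classes of indecomposable finite-dimensional representations over k if and only if its underlying undirected graph is a Dynkin graph of type A_n (n≥1), D_n (n≥4), E_6, E_7, or E_8. More generally, an arbitrary finite quiver is of finite representation type if and only if its underlying graph is a disjoint union of Dynkin graphs of type A, D, or E. -/

import Mathlib

/-! Statement 9 (Gabriel's theorem, part 1): a finite connected quiver has finite
representation type over an algebraically closed field iff its underlying graph is a
Dynkin graph of type A, D or E; an arbitrary finite quiver has finite representation
type iff its underlying graph is a disjoint union of such Dynkin graphs. -/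

/-- A finite-dimensional representation of the quiver `(I, E, s, t)` over the field `k`:
a finite-dimensional `k`-vector space `V i` for each vertex `i` and a `k`-linear map
`f e : V (s e) → V (t e)` for each arrow `e`. -/
structure QRep (k : Type) [Field k] (I E : Type) (s t : E → I) where
  V : I → Type
  [acg : ∀ i, AddCommGroup (V i)]
  [mod : ∀ i, Module k (V i)]
  [fd : ∀ i, FiniteDimensional k (V i)]
  f : ∀ e : E, V (s e) →ₗ[k] V (t e)

attribute [instance] QRep.acg QRep.mod QRep.fd

namespace QRep

variable {k : Type} [Field k] {I E : Type} {s t : E → I}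

/-- Isomorphism of quiver representations: a collection of linear equivalences commuting
with the structure maps. -/
def Iso (M N : QRep k I E s t) : Prop :=
  ∃ φ : ∀ i, M.V i ≃ₗ[k] N.V i,
    ∀ (e : E) (v : M.V (s e)), φ (t e) (M.f e v) = N.f e (φ (s e) v)

/-- Direct sum of two quiver representations, defined vertexwise and arrowwise. -/
def dsum (M N : QRep k I E s t) : QRep k I E s t where
  V i := M.V i × N.V i
  f e := (M.f e).prodMap (N.f e)

/-- The trivial (zero) representation. -/
def zero (k : Type) [Field k] (I E : Type) (s t : E → I) : QRep k I E s t where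
  V _ := PUnit
  f _ := 0

/-- A representation is trivial if all its vector spaces are zero. -/
def IsTrivial (M : QRep k I E s t) : Prop := ∀ i, Subsingleton (M.V i)

/-- A representation is indecomposable if it is nontrivial and not isomorphic to a direct
sum of two nontrivial representations. -/
def Indecomposable (M : QRep k I E s t) : Prop :=
  ¬ M.IsTrivial ∧
    ∀ A B : QRep k I E s t, ¬ A.IsTrivial → ¬ B.IsTrivial → ¬ M.Iso (A.dsum B)

/-- Finite direct sums of quiver representations. -/
def dsumFin : (n : ℕ) → (Fin n → QRep k I E s t) → QRep k I E s t
  | 0, _ => zero k I E s t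
  | n + 1, F => (F 0).dsum (dsumFin n fun a => F a.succ)

/-- The dimension vector of a representation. -/
noncomputable def dimVec (M : QRep k I E s t) : I → ℕ := fun i => Module.finrank k (M.V i)

end QRep

/-- Number of edges of the path `0 — 1 — ⋯ — m` between the vertices `i` and `j`. -/
def segCount (m i j : ℕ) : ℕ :=
  if (i + 1 = j ∧ j ≤ m) ∨ (j + 1 = i ∧ i ≤ m) then 1 else 0

/-- Indicator of a single (undirected) edge between vertices `a` and `b`. -/
def edgeInd (a b i j : ℕ) : ℕ :=
  if (i = a ∧ j = b) ∨ (i = b ∧ j = a) then 1 else 0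

/-- Edge multiplicities of the Dynkin graph `A_n`: the path on `n` vertices. -/
def aCount (n : ℕ) (i j : Fin n) : ℕ := segCount (n - 1) i j

/-- Edge multiplicities of the Dynkin graph `D_n` (`n ≥ 4`): the path on the `n - 1`
vertices `0, …, n-2` with the extra vertex `n-1` attached to vertex `1`. -/
def dCount (n : ℕ) (i j : Fin n) : ℕ := segCount (n - 2) i j + edgeInd 1 (n - 1) i j

/-- Edge multiplicities of the Dynkin graph `E_n` (`n = 6, 7, 8`): the path on the `n - 1`
vertices `0, …, n-2` with the extra vertex `n-1` attached to vertex `2`. -/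
def eCount (n : ℕ) (i j : Fin n) : ℕ := segCount (n - 2) i j + edgeInd 2 (n - 1) i j

/-- Isomorphism of undirected multigraphs described by their edge-multiplicity functions. -/
def IsGraphIso {α β : Type} (c : α → α → ℕ) (d : β → β → ℕ) : Prop :=
  ∃ e : α ≃ β, ∀ i j, c i j = d (e i) (e j)

/-- The multigraph `c` is a Dynkin graph of type `A`, `D` or `E`. -/
def IsADE {α : Type} (c : α → α → ℕ) : Prop :=
  (∃ n : ℕ, 1 ≤ n ∧ IsGraphIso c (aCount n)) ∨
  (∃ n : ℕ, 4 ≤ n ∧ IsGraphIso c (dCount n)) ∨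
  (∃ n : ℕ, (n = 6 ∨ n = 7 ∨ n = 8) ∧ IsGraphIso c (eCount n))

/-- Edge multiplicities of the underlying undirected graph of the quiver `(I, E, s, t)`:
the number of arrows between `i` and `j` in either direction. -/
noncomputable def quivCount {I E : Type} (s t : E → I) (i j : I) : ℕ :=
  Nat.card {e : E // (s e = i ∧ t e = j) ∨ (s e = j ∧ t e = i)}

/-- The underlying graph of `c` is a disjoint union of Dynkin graphs of type `A`, `D`, `E`:
the vertices can be partitioned so that all edges stay within one part and each part is a
Dynkin graph of type `A`, `D`, or `E`. -/
def IsDisjUnionADE {I : Type} (c : I → I → ℕ) : Prop :=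
  ∃ (σ : Type) (part : I → σ),
    (∀ i j, c i j ≠ 0 → part i = part j) ∧
    ∀ s0 : σ, IsADE (fun i j : {x : I // part x = s0} => c i.1 j.1)

/-- A quiver has finite representation type over `k` if it has only finitely many
isomorphism classes of indecomposable (finite-dimensional) representations. -/
def FiniteRepType (k : Type) [Field k] (I E : Type) (s t : E → I) : Prop :=
  ∃ (n : ℕ) (F : Fin n → QRep k I E s t),
    ∀ M : QRep k I E s t, M.Indecomposable → ∃ a, M.Iso (F a)

/-- The underlying graph of the quiver `(I, E, s, t)` is connected. -/
def QuivConnected (I E : Type) (s t : E → I) : Prop :=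
  Nonempty I ∧ ∀ i j : I,
    Relation.ReflTransGen (fun a b => ∃ e : E, (s e = a ∧ t e = b) ∨ (s e = b ∧ t e = a)) i j

namespace QRep

variable {k : Type} [Field k] {I E : Type} {s t : E → I}

theorem Iso.symm' {M N : QRep k I E s t} (h : M.Iso N) : N.Iso M := by
  obtain ⟨φ, hφ⟩ := h
  refine ⟨fun i => (φ i).symm, fun e v => ?_⟩
  rw [LinearEquiv.symm_apply_eq, hφ]
  simp

theorem Iso.trans' {M N P : QRep k I E s t} (h : M.Iso N) (h2 : N.Iso P) : M.Iso P := by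
  obtain ⟨φ, hφ⟩ := h
  obtain ⟨ψ, hψ⟩ := h2
  refine ⟨fun i => (φ i).trans (ψ i), fun e v => ?_⟩
  simp [hφ, hψ]

theorem Iso.dsum' {M N P Q : QRep k I E s t} (h : M.Iso N) (h2 : P.Iso Q) :
    (M.dsum P).Iso (N.dsum Q) := by
  obtain ⟨φ, hφ⟩ := h
  obtain ⟨ψ, hψ⟩ := h2
  refine ⟨fun i => LinearEquiv.prodCongr (φ i) (ψ i), fun e v => ?_⟩
  exact Prod.ext (hφ e v.1) (hψ e v.2)

/-- A family of subspaces closed under the structure maps. -/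
def IsSub (M : QRep k I E s t) (U : ∀ i, Submodule k (M.V i)) : Prop :=
  ∀ e (v : M.V (s e)), v ∈ U (s e) → M.f e v ∈ U (t e)

/-- The subrepresentation on a family of subspaces. -/
def sub (M : QRep k I E s t) (U : ∀ i, Submodule k (M.V i)) (hU : M.IsSub U) :
    QRep k I E s t where
  V i := U i
  f e := (M.f e).restrict (hU e)

/-- Internal indecomposability. -/
def IndecI (M : QRep k I E s t) : Prop :=
  ¬ M.IsTrivial ∧ ∀ U W : ∀ i, Submodule k (M.V i), M.IsSub U → M.IsSub W →
    (∀ i, IsCompl (U i) (W i)) → (∀ i, U i = ⊥) ∨ (∀ i, W i = ⊥)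

theorem Indecomposable.indecI {M : QRep k I E s t} (h : M.Indecomposable) : M.IndecI := by
  refine ⟨h.1, fun U W hU hW hc => ?_⟩
  by_contra hcon
  push Not at hcon
  obtain ⟨⟨i, hi⟩, ⟨j, hj⟩⟩ := hcon
  refine h.2 (M.sub U hU) (M.sub W hW) ?_ ?_ (Iso.symm' ?_)
  · intro h
    have := h i
    exact hi ((Submodule.subsingleton_iff_eq_bot).1 this)
  · intro h
    have := h j
    exact hj ((Submodule.subsingleton_iff_eq_bot).1 this)
  · refine ⟨fun i => Submodule.prodEquivOfIsCompl (U i) (W i) (hc i), fun e v => ?_⟩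
    obtain ⟨(a : U (s e)), (b : W (s e))⟩ := v
    change ((M.f e a : M.V (t e))) + M.f e b = M.f e ((a : M.V (s e)) + b)
    rw [map_add]

/-- Endomorphisms. -/
def IsEndo (M : QRep k I E s t) (φ : ∀ i, M.V i →ₗ[k] M.V i) : Prop :=
  ∀ e (v : M.V (s e)), φ (t e) (M.f e v) = M.f e (φ (s e) v)

theorem IsEndo.pow {M : QRep k I E s t} {φ : ∀ i, M.V i →ₗ[k] M.V i} (h : M.IsEndo φ) (n : ℕ) :
    M.IsEndo (fun i => φ i ^ n) := by
  intro e v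
  induction n generalizing v with
  | zero => simp
  | succ n ih => 
    simp only [pow_succ, Module.End.mul_apply] at ih ⊢
    rw [h e v, ih]

/-- Fitting: a noninjective endomorphism of an indecomposable is nilpotent. -/
theorem IndecI.fitting {M : QRep k I E s t} (hM : M.IndecI) {φ : ∀ i, M.V i →ₗ[k] M.V i}
    (h : M.IsEndo φ) (hn : ∃ i, LinearMap.ker (φ i) ≠ ⊥) : ∀ i, (⨆ n, LinearMap.ker (φ i ^ n)) = ⊤ := by
  have key := hM.2 (fun i => ⨆ n, LinearMap.ker (φ i ^ n)) (fun i => ⨅ n, LinearMap.range (φ i ^ n))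
    ?_ ?_ (fun i => (φ i).isCompl_iSup_ker_pow_iInf_range_pow)
  · rcases key with key | key
    · obtain ⟨i, hi⟩ := hn
      exfalso; apply hi
      rw [eq_bot_iff, ← key i]
      exact le_iSup_of_le 1 (by simp)
    · intro i
      have := (φ i).isCompl_iSup_ker_pow_iInf_range_pow
      have h2 := key i
      rw [h2] at this
      rw [← this.sup_eq_top, sup_bot_eq]
  · intro e v hv
    replace hv := (Submodule.mem_iSup_of_directed _ (LinearMap.iterateKer (φ _)).monotone.directed_le).1 hv
    refine (Submodule.mem_iSup_of_directed _ (LinearMap.iterateKer (φ _)).monotone.directed_le).2 ?_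
    obtain ⟨n, hn⟩ := hv
    refine ⟨n, ?_⟩
    change (φ (s e) ^ n) v = 0 at hn
    change (φ (t e) ^ n) _ = 0
    have := h.pow n e v
    simp only at this
    rw [this, hn, map_zero]
  · intro e v hv
    rw [Submodule.mem_iInf] at hv ⊢
    intro n
    obtain ⟨w, rfl⟩ := hv n
    exact ⟨M.f e w, h.pow n e w⟩

theorem nilp_range {V : Type} [AddCommGroup V] [Module k V] [FiniteDimensional k V]
    (φ : V →ₗ[k] V) (h : (⨆ n, LinearMap.ker (φ ^ n)) = ⊤)
    (h2 : LinearMap.range (φ ^ 2) = LinearMap.range φ) : φ = 0 := by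
  have hr : ∀ n, LinearMap.range (φ ^ (n + 1)) = LinearMap.range φ := by
    intro n
    induction n with
    | zero => simp
    | succ n ih => 
      rw [pow_succ', Module.End.mul_eq_comp, LinearMap.range_comp, ih, ← LinearMap.range_comp, ← h2, pow_two, Module.End.mul_eq_comp]
  ext v
  have hv : φ v ∈ ⨆ n, LinearMap.ker (φ ^ n) := by rw [h]; trivial
  have hc := φ.isCompl_iSup_ker_pow_iInf_range_pow
  have : φ v ∈ ⨅ n, LinearMap.range (φ ^ n) := by
    rw [Submodule.mem_iInf]
    intro n
    rcases n with _ | n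
    · simp
    · rw [hr]; exact ⟨v, rfl⟩
  exact (Submodule.disjoint_def.1 hc.disjoint) _ hv this

end QRep

namespace QRep

variable {k : Type} [Field k] {I E : Type} {s t : E → I}

theorem factor_of_ker_le {V W U : Type} [AddCommGroup V] [Module k V] [AddCommGroup W] [Module k W]
    [AddCommGroup U] [Module k U] (β : V →ₗ[k] W) (η : V →ₗ[k] U)
    (h : ∀ v, β v = 0 → η v = 0) : ∃ γ : W →ₗ[k] U, ∀ v, η v = γ (β v) := by
  obtain ⟨σ, hσ⟩ := LinearMap.exists_rightInverse_of_surjective β.rangeRestrict β.range_rangeRestrict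
  obtain ⟨γ, hγ⟩ := (η ∘ₗ σ).exists_extend
  refine ⟨γ, fun v => ?_⟩
  have h1 := LinearMap.congr_fun hγ (β.rangeRestrict v)
  have h2 := congrArg Subtype.val (LinearMap.congr_fun hσ (β.rangeRestrict v))
  simp at h1 h2
  rw [h1, ← sub_eq_zero, ← map_sub]
  apply h
  rw [map_sub, h2, sub_self]

theorem eq_of_sum_le {J : Type} [Fintype J] {f g : J → ℕ} (h : ∀ i, f i ≤ g i)
    (h2 : ∑ i, g i ≤ ∑ i, f i) (i : J) : f i = g i :=
  (Finset.sum_eq_sum_iff_of_le (fun i _ => h i)).1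
    (le_antisymm (Finset.sum_le_sum fun i _ => h i) h2) i (Finset.mem_univ i)

/-- Vanishing of self-extensions. -/
def ExtZero (M : QRep k I E s t) : Prop :=
  ∀ η : ∀ e, M.V (s e) →ₗ[k] M.V (t e), ∃ ψ : ∀ i, M.V i →ₗ[k] M.V i,
    ∀ e v, η e v = ψ (t e) (M.f e v) - M.f e (ψ (s e) v)

variable [Fintype I]

theorem core {M : QRep k I E s t} (hM : M.IndecI) {φ₀ : ∀ i, M.V i →ₗ[k] M.V i}
    (h₀ : M.IsEndo φ₀) (hz : ∃ i, φ₀ i ≠ 0) (hn : ∃ i, LinearMap.ker (φ₀ i) ≠ ⊥) :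
    ∃ (A : ∀ i, Submodule k (M.V i)) (hA : M.IsSub A), (M.sub A hA).IndecI ∧
      (∑ i, (M.sub A hA).dimVec i < ∑ i, M.dimVec i) ∧ ¬ (M.sub A hA).ExtZero := by
  classical
  let rk : (∀ i, M.V i →ₗ[k] M.V i) → ℕ := fun φ => ∑ i, Module.finrank k (LinearMap.range (φ i))
  obtain ⟨θ, ⟨hθ, ⟨iz, hiz⟩, ⟨ik, hik⟩⟩, hmin⟩ := (measure rk).wf.has_min
    {φ | M.IsEndo φ ∧ (∃ i, φ i ≠ 0) ∧ (∃ i, LinearMap.ker (φ i) ≠ ⊥)} ⟨φ₀, h₀, hz, hn⟩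
  replace hmin : ∀ φ, M.IsEndo φ → (∃ i, φ i ≠ 0) → (∃ i, LinearMap.ker (φ i) ≠ ⊥) → rk θ ≤ rk φ :=
    fun φ h1 h2 h3 => not_lt.1 (hmin φ ⟨h1, h2, h3⟩)
  clear h₀ hz hn
  have hnil := hM.fitting hθ ⟨ik, hik⟩
  -- square zero
  have hsq : ∀ i v, θ i (θ i v) = 0 := by
    by_contra hcon
    push Not at hcon
    obtain ⟨i, v, hv⟩ := hcon
    have h1 := hmin (fun i => θ i ^ 2) (hθ.pow 2) ⟨i, fun h => hv (by
      have := LinearMap.congr_fun h v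
      simpa [pow_two] using this)⟩ ⟨ik, fun h => hik (by
        rw [eq_bot_iff, ← h]
        intro x hx
        rw [LinearMap.mem_ker] at hx
        simp [pow_two, hx])⟩
    have hle : ∀ i, LinearMap.range (θ i ^ 2) ≤ LinearMap.range (θ i) := by
      intro i
      rw [pow_two]
      exact LinearMap.range_comp_le_range _ _
    have h2 := eq_of_sum_le (fun i => Submodule.finrank_mono (hle i)) h1 iz
    exact hiz (nilp_range _ (hnil iz) (Submodule.eq_of_le_of_finrank_eq (hle iz) h2))
  -- minimal summand
  let P2 : ((∀ i, Submodule k (M.V i)) × (∀ i, Submodule k (M.V i))) → Prop := fun p =>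
    M.IsSub p.1 ∧ M.IsSub p.2 ∧ (∀ i, Disjoint (p.1 i) (p.2 i)) ∧
      (∀ i, p.1 i ⊔ p.2 i = LinearMap.ker (θ i)) ∧ ∃ i, ¬ LinearMap.range (θ i) ≤ p.2 i
  have hP2 : P2 (fun i => LinearMap.ker (θ i), fun i => ⊥) := by
    refine ⟨?_, ?_, fun i => disjoint_bot_right, fun i => by simp, iz, ?_⟩
    · intro e v hv
      rw [LinearMap.mem_ker] at hv ⊢
      rw [hθ, hv, map_zero]
    · intro e v hv
      rw [Submodule.mem_bot] at hv ⊢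
      rw [hv, map_zero]
    · intro h
      exact hiz (LinearMap.range_eq_bot.1 (le_bot_iff.1 h))
  obtain ⟨⟨A, B⟩, ⟨hA, hB, hdis, hsup, ⟨ib, hib⟩⟩, hmin2⟩ := (measure
    (fun p : (∀ i, Submodule k (M.V i)) × (∀ i, Submodule k (M.V i)) =>
      ∑ i, Module.finrank k (p.1 i))).wf.has_min {p | P2 p} ⟨_, hP2⟩
  replace hmin2 : ∀ A' B', P2 (A', B') →
      ∑ i, Module.finrank k (A i) ≤ ∑ i, Module.finrank k (A' i) :=
    fun A' B' h => not_lt.1 (hmin2 (A', B') h)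
  simp only at hA hB hdis hsup hib
  have hAK : ∀ i, A i ≤ LinearMap.ker (θ i) := fun i => hsup i ▸ le_sup_left
  have hBK : ∀ i, B i ≤ LinearMap.ker (θ i) := fun i => hsup i ▸ le_sup_right
  have hρ : ∀ i, ∃ ρ : M.V i →ₗ[k] A i, (∀ a : A i, ρ a = a) ∧ ∀ b ∈ B i, ρ b = 0 := by
    intro i
    obtain ⟨B', hBB, hc⟩ := (hdis i).symm.exists_isCompl
    refine ⟨Submodule.projectionOnto _ _ hc.symm, fun a => ?_, fun b hb => ?_⟩
    · exact Submodule.projectionOnto_apply_left _ a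
    · exact (Submodule.projectionOnto_apply_eq_zero_iff _).2 (hBB hb)
  choose ρ hρA hρB using hρ
  have hρK : ∀ e (w : M.V (s e)), w ∈ LinearMap.ker (θ (s e)) →
      (ρ (t e) (M.f e w) : M.V (t e)) = M.f e (ρ (s e) w) := by
    intro e w hw
    rw [← hsup] at hw
    obtain ⟨a, ha, b, hb, rfl⟩ := Submodule.mem_sup.1 hw
    rw [map_add, map_add, map_add, hρB _ _ hb, hρB _ _ (hB e b hb), hρA _ ⟨a, ha⟩,
      hρA _ ⟨M.f e a, hA e a ha⟩]
    simp
  have hIK : ∀ i v, θ i v ∈ LinearMap.ker (θ i) := fun i v => hsq i v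
  have hβ : ∀ e v, (ρ (t e) (θ (t e) (M.f e v)) : M.V (t e)) = M.f e (ρ (s e) (θ (s e) v)) := by
    intro e v
    rw [hθ, hρK _ _ (hIK _ _)]
  -- the projection is not zero on the image
  obtain ⟨w, ⟨v₀, rfl⟩, hwB⟩ := Set.not_subset.1 hib
  have hβ0 : ρ ib (θ ib v₀) ≠ 0 := by
    intro h
    apply hwB
    have := hIK ib v₀
    rw [← hsup] at this
    obtain ⟨a, ha, b, hb, hab⟩ := Submodule.mem_sup.1 this
    rw [← hab, map_add, hρB _ _ hb, hρA _ ⟨a, ha⟩, add_zero] at h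
    have h' : a = 0 := congrArg Subtype.val h
    rw [← hab, h', zero_add]
    exact hb
  have hkβ : ∀ i v, ρ i (θ i v) = 0 → θ i v = 0 := by
    have h1 := hmin (fun i => (A i).subtype ∘ₗ ρ i ∘ₗ θ i) (fun e v => by simpa using hβ e v)
      ⟨ib, fun h => hβ0 (Subtype.ext (LinearMap.congr_fun h v₀))⟩ ⟨ik, fun h => hik (by
        rw [eq_bot_iff, ← h]
        intro x hx
        rw [LinearMap.mem_ker] at hx
        simp [hx])⟩
    have hle : ∀ i, Module.finrank k (LinearMap.range ((A i).subtype ∘ₗ ρ i ∘ₗ θ i)) ≤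
        Module.finrank k (LinearMap.range (θ i)) := by
      intro i
      rw [← LinearMap.comp_assoc, LinearMap.range_comp]
      exact Submodule.finrank_map_le _ _
    intro i v hv
    have h2 := eq_of_sum_le hle h1 i
    have h3 := LinearMap.finrank_range_add_finrank_ker (θ i)
    have h4 := LinearMap.finrank_range_add_finrank_ker ((A i).subtype ∘ₗ ρ i ∘ₗ θ i)
    have h5 : LinearMap.ker (θ i) ≤ LinearMap.ker ((A i).subtype ∘ₗ ρ i ∘ₗ θ i) := by
      intro x hx
      rw [LinearMap.mem_ker] at hx
      simp [hx]
    have h6 := Submodule.eq_of_le_of_finrank_eq h5 (by omega)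
    change v ∈ LinearMap.ker (θ i)
    rw [h6]
    simp [hv]
  refine ⟨A, hA, ⟨?_, ?_⟩, ?_, ?_⟩
  · intro h
    have := h ib
    exact hβ0 (this.elim _ _)
  · have aux : ∀ U W : ∀ i, Submodule k (A i), (M.sub A hA).IsSub U → (M.sub A hA).IsSub W →
        (∀ i, IsCompl (U i) (W i)) →
        (∃ i, ¬ LinearMap.range (θ i) ≤ (W i).map (A i).subtype ⊔ B i) → ∀ i, W i = ⊥ := by
      intro U W hU hW hc hex
      have h1 := hmin2 (fun i => (U i).map (A i).subtype) (fun i => (W i).map (A i).subtype ⊔ B i) ?_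
      · intro i
        have hle : ∀ i, (U i).map (A i).subtype ≤ A i := fun i => Submodule.map_subtype_le _ _
        have h2 := Submodule.eq_of_le_of_finrank_eq (hle i)
          (eq_of_sum_le (fun i => Submodule.finrank_mono (hle i)) h1 i)
        have h3 : U i = ⊤ := by
          rw [eq_top_iff]
          intro x _
          have hx : (x : M.V i) ∈ (U i).map (A i).subtype := by rw [h2]; exact x.2
          obtain ⟨y, hy, hyx⟩ := hx
          rwa [← Subtype.ext hyx]
        have h4 := (hc i).inf_eq_bot
        rwa [h3, top_inf_eq] at h4
      · refine ⟨?_, ?_, ?_, ?_, hex⟩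
        · rintro e v ⟨a, ha, rfl⟩
          exact ⟨_, hU e a ha, rfl⟩
        · intro e v hv
          obtain ⟨_, ⟨a, ha, rfl⟩, b, hb, rfl⟩ := Submodule.mem_sup.1 hv
          rw [map_add]
          exact Submodule.add_mem_sup ⟨_, hW e a ha, rfl⟩ (hB e b hb)
        · intro i
          rw [Submodule.disjoint_def]
          rintro _ ⟨a, ha, rfl⟩ hx
          obtain ⟨_, ⟨c, hc', rfl⟩, b, hb, hab⟩ := Submodule.mem_sup.1 hx
          have hb0 : b = 0 := by
            refine Submodule.disjoint_def.1 (hdis i) b ?_ hb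
            have : b = ((a - c : A i) : M.V i) := by
              rw [Submodule.coe_sub]
              exact eq_sub_of_add_eq' hab
            rw [this]; exact Subtype.mem _
          rw [hb0, add_zero] at hab
          have : c = a := Subtype.ext hab
          subst this
          have := Submodule.disjoint_def.1 (hc i).disjoint c ha hc'
          rw [this]; rfl
        · intro i
          simp only
          rw [← sup_assoc, ← Submodule.map_sup, (hc i).sup_eq_top, Submodule.map_top,
            Submodule.range_subtype, hsup]
    intro U W hU hW hc
    by_cases hex : ∃ i, ¬ LinearMap.range (θ i) ≤ (Submodule.map (A i).subtype (W i)) ⊔ B i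
    · exact Or.inr (aux U W hU hW hc hex)
    · left
      refine aux W U hW hU (fun i => (hc i).symm) ⟨ib, fun hcon => ?_⟩
      push Not at hex
      apply hwB
      obtain ⟨_, ⟨u, hu, rfl⟩, b, hb, hab⟩ := Submodule.mem_sup.1 (hcon ⟨v₀, rfl⟩)
      obtain ⟨_, ⟨w, hw, rfl⟩, b', hb', hab'⟩ := Submodule.mem_sup.1 (hex ib ⟨v₀, rfl⟩)
      have e1 : ρ ib (θ ib v₀) = u := by
        rw [← hab, map_add, hρB _ _ hb, add_zero]; exact hρA _ _
      have e2 : ρ ib (θ ib v₀) = w := by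
        rw [← hab', map_add, hρB _ _ hb', add_zero]; exact hρA _ _
      have e3 : u = w := e1.symm.trans e2
      subst e3
      exact absurd (e1.trans (Submodule.disjoint_def.1 (hc ib).disjoint _ hu hw)) hβ0
  · refine Finset.sum_lt_sum (fun i _ => Submodule.finrank_le (A i)) ⟨iz, Finset.mem_univ _, ?_⟩
    refine Submodule.finrank_lt ?_
    intro h
    apply hiz
    have := hAK iz
    rw [h] at this
    exact LinearMap.ker_eq_top.1 (top_le_iff.1 this)
  · intro hext
    have hη : ∀ e, ∃ γ : A (s e) →ₗ[k] A (t e), ∀ v,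
        ((ρ (t e) ∘ₗ M.f e) - ((M.f e).restrict (hA e)) ∘ₗ ρ (s e)) v = γ (ρ (s e) (θ (s e) v)) := by
      intro e
      refine factor_of_ker_le (ρ (s e) ∘ₗ θ (s e)) _ (fun v hv => ?_)
      have := hρK e v (hkβ _ _ hv)
      apply Subtype.ext
      simp [this]
    choose η hη using hη
    have hext2 : ∃ ψ : ∀ i, A i →ₗ[k] A i, ∀ e v, η e v =
      ψ (t e) ((M.f e).restrict (hA e) v) - (M.f e).restrict (hA e) (ψ (s e) v) := hext η
    obtain ⟨ψ, hψ⟩ := hext2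
    let r : ∀ i, M.V i →ₗ[k] A i := fun i => ρ i - ψ i ∘ₗ ρ i ∘ₗ θ i
    have hrA : ∀ i (a : A i), r i a = a := by
      intro i a
      have : θ i a = 0 := hAK i a.2
      simp [r, hρA, this]
    have hr : ∀ e v, (r (t e) (M.f e v)) = (M.f e).restrict (hA e) (r (s e) v) := by
      intro e v
      have h1 := hη e v
      have h2 := hψ e (ρ (s e) (θ (s e) v))
      rw [h2] at h1
      have h3 : (ρ (t e) (θ (t e) (M.f e v))) = (M.f e).restrict (hA e) (ρ (s e) (θ (s e) v)) :=
        Subtype.ext (hβ e v)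
      change ρ (t e) (M.f e v) - ψ (t e) (ρ (t e) (θ (t e) (M.f e v))) =
        (M.f e).restrict (hA e) (ρ (s e) v - ψ (s e) (ρ (s e) (θ (s e) v)))
      rw [h3, map_sub]
      change ρ (t e) (M.f e v) - (M.f e).restrict (hA e) (ρ (s e) v) =
        ψ (t e) ((M.f e).restrict (hA e) (ρ (s e) (θ (s e) v))) -
          (M.f e).restrict (hA e) (ψ (s e) (ρ (s e) (θ (s e) v))) at h1
      rw [sub_eq_sub_iff_sub_eq_sub]
      exact h1
    rcases hM.2 A (fun i => LinearMap.ker (r i)) hA (fun e v hv => by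
      rw [LinearMap.mem_ker] at hv ⊢
      rw [hr, hv, map_zero]) (fun i => LinearMap.isCompl_of_proj (hrA i)) with h | h
    · have hbot := h ib
      apply hβ0
      have h7 := (ρ ib (θ ib v₀)).2
      have h9 : ∀ x ∈ A ib, x = 0 := by rw [hbot]; simp
      exact Subtype.ext (h9 _ h7)
    · have hc := (LinearMap.isCompl_of_proj (hrA iz)).sup_eq_top
      have h8 := h iz
      rw [h8, sup_bot_eq] at hc
      apply hiz
      have := hAK iz
      rw [hc] at this
      exact LinearMap.ker_eq_top.1 (top_le_iff.1 this)

end QRep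


/-- The Tits form of a quiver. -/
def titsQ {I E : Type} [Fintype I] [Fintype E] (s t : E → I) (d : I → ℕ) : ℤ :=
  ∑ i, (d i : ℤ) * d i - ∑ e, (d (s e) : ℤ) * d (t e)

namespace QRep

variable {k : Type} [Field k] {I E : Type} {s t : E → I}

/-- The map whose kernel is `Hom` and whose cokernel is `Ext`. -/
def dmap (V : I → Type) [∀ i, AddCommGroup (V i)] [∀ i, Module k (V i)]
    (f g : ∀ e : E, V (s e) →ₗ[k] V (t e)) :
    (∀ i, V i →ₗ[k] V i) →ₗ[k] (∀ e : E, V (s e) →ₗ[k] V (t e)) where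
  toFun φ e := φ (t e) ∘ₗ f e - g e ∘ₗ φ (s e)
  map_add' φ ψ := by
    ext e v
    simp
    abel
  map_smul' c φ := by
    ext e v
    simp [smul_sub]

variable [Fintype I] [Fintype E]

set_option linter.unusedSectionVars false

/-- The good properties of indecomposables. -/
structure Good (M : QRep k I E s t) : Prop where
  nontriv : ¬ M.IsTrivial
  scal : ∀ φ, M.IsEndo φ → ∃ c : k, ∀ i, φ i = c • LinearMap.id
  ext : Function.Surjective (dmap M.V M.f M.f)
  q : titsQ s t M.dimVec = 1

theorem dimVec_ne_zero {M : QRep k I E s t} (h : ¬ M.IsTrivial) : M.dimVec ≠ 0 := by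
  intro h0
  apply h
  intro i
  have : Module.finrank k (M.V i) = 0 := congrFun h0 i
  exact Module.finrank_zero_iff.1 this

theorem good_of_scal (hq : ∀ d : I → ℕ, d ≠ 0 → 0 < titsQ s t d) {M : QRep k I E s t}
    (h : ¬ M.IsTrivial) (hs : ∀ φ, M.IsEndo φ → ∃ c : k, ∀ i, φ i = c • LinearMap.id) : M.Good := by
  have hq1 := hq _ (dimVec_ne_zero h)
  have hker : Module.finrank k (LinearMap.ker (dmap M.V M.f M.f)) ≤ 1 := by
    refine finrank_le_one ⟨fun i => LinearMap.id, ?_⟩ ?_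
    · rw [LinearMap.mem_ker]
      ext e v
      simp [dmap]
    · rintro ⟨φ, hφ⟩
      obtain ⟨c, hc⟩ := hs φ (by
        intro e v
        have := LinearMap.congr_fun (congrFun hφ e) v
        simpa [dmap, sub_eq_zero] using this)
      refine ⟨c, Subtype.ext ?_⟩
      ext i : 1
      exact (hc i).symm
  have h1 := LinearMap.finrank_range_add_finrank_ker (dmap M.V M.f M.f)
  have h2 : Module.finrank k (∀ i, M.V i →ₗ[k] M.V i) = ∑ i, M.dimVec i * M.dimVec i := by
    rw [Module.finrank_pi_fintype]
    simp [Module.finrank_linearMap, dimVec]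
  have h3 : Module.finrank k (∀ e, M.V (s e) →ₗ[k] M.V (t e)) =
      ∑ e, M.dimVec (s e) * M.dimVec (t e) := by
    rw [Module.finrank_pi_fintype]
    simp [Module.finrank_linearMap, dimVec]
  have h4 := Submodule.finrank_le (LinearMap.range (dmap M.V M.f M.f))
  have h5 : titsQ s t M.dimVec = (∑ i, M.dimVec i * M.dimVec i : ℕ) -
    (∑ e, M.dimVec (s e) * M.dimVec (t e) : ℕ) := by
    simp [titsQ]
  refine ⟨h, hs, ?_, by omega⟩
  rw [← LinearMap.range_eq_top]
  apply Submodule.eq_top_of_finrank_eq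
  omega

theorem Good.extZero {M : QRep k I E s t} (h : M.Good) : M.ExtZero := by
  intro η
  obtain ⟨ψ, hψ⟩ := h.ext η
  refine ⟨ψ, fun e v => ?_⟩
  rw [← hψ]
  simp [dmap]

theorem good_of_indecI [IsAlgClosed k] (hq : ∀ d : I → ℕ, d ≠ 0 → 0 < titsQ s t d) :
    ∀ (N : ℕ) (M : QRep k I E s t), M.IndecI → ∑ i, M.dimVec i = N → M.Good := by
  intro N
  induction N using Nat.strong_induction_on with
  | _ N ih =>
  intro M hM hN
  have hzero : ∀ φ, M.IsEndo φ → (∃ i, LinearMap.ker (φ i) ≠ ⊥) → ∀ i, φ i = 0 := by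
    intro φ hφ hk
    by_contra hcon
    push Not at hcon
    obtain ⟨A, hA, hAi, hlt, hext⟩ := core hM hφ hcon hk
    exact hext (ih _ (hN ▸ hlt) _ hAi rfl).extZero
  refine good_of_scal hq hM.1 (fun φ hφ => ?_)
  have h1 := hM.1
  unfold IsTrivial at h1
  push Not at h1
  obtain ⟨i, hi⟩ := h1
  obtain ⟨c, hc⟩ := Module.End.exists_eigenvalue (φ i)
  refine ⟨c, fun j => ?_⟩
  have := hzero (fun i => φ i - c • LinearMap.id) (fun e v => by simp [hφ e v]) ⟨i, ?_⟩ j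
  · exact sub_eq_zero.1 this
  · obtain ⟨v, hv⟩ := hc.exists_hasEigenvector
    intro hb
    apply hv.2
    rw [← Submodule.mem_bot k, ← hb, LinearMap.mem_ker]
    simp [hv.apply_eq_smul]

open Polynomial in
/-- A polynomial curve of kernel vectors. -/
theorem curve {ι : Type} [Fintype ι] [DecidableEq ι] {Ψ : Type} [AddCommGroup Ψ] [Module k Ψ]
    (T T' : (ι → k) →ₗ[k] Ψ)
    (hT : Function.Surjective T) (v : ι → k) (hv : v ≠ 0) (hTv : T v = 0)
    (hker : ∀ w, T w = 0 → ∃ c : k, w = c • v) :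
    ∃ w : ι → k[X], (∀ j, (w j).eval 0 = v j) ∧
      ∀ l : k, (T + l • T') (fun j => (w j).eval l) = 0 := by
  obtain ⟨j₀, hj₀⟩ := Function.ne_iff.1 hv
  let ℓ : (ι → k) →ₗ[k] k := (v j₀)⁻¹ • LinearMap.proj j₀
  have hℓ : ℓ v = 1 := by simp [ℓ]; exact inv_mul_cancel₀ hj₀
  let T₀ : (ι → k) →ₗ[k] Ψ × k := T.prod ℓ
  have hinj : Function.Injective T₀ := by
    rw [injective_iff_map_eq_zero]
    intro w hw
    obtain ⟨c, rfl⟩ := hker w (congrArg Prod.fst hw)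
    have h2 : ℓ (c • v) = 0 := congrArg Prod.snd hw
    rw [map_smul, hℓ, smul_eq_mul, mul_one] at h2
    rw [h2, zero_smul]
  have hsur : Function.Surjective T₀ := by
    rintro ⟨y, a⟩
    obtain ⟨w, rfl⟩ := hT y
    refine ⟨w + (a - ℓ w) • v, Prod.ext ?_ ?_⟩
    · simp [T₀, hTv]
    · simp [T₀, hℓ]
  let S : (ι → k) ≃ₗ[k] Ψ × k := LinearEquiv.ofBijective T₀ ⟨hinj, hsur⟩
  have hSv : S.symm (0, 1) = v := by
    rw [LinearEquiv.symm_apply_eq]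
    exact Prod.ext hTv.symm hℓ.symm
  let Z : Matrix ι ι k := LinearMap.toMatrix' (S.symm.toLinearMap ∘ₗ (T'.prod 0))
  let W : Matrix ι ι k[X] := 1 + (X : k[X]) • Z.map (fun a => (C a : k[X]))
  have hW : ∀ l : k, W.map (eval l) = 1 + l • Z := by
    intro l
    ext a b
    simp [W, Matrix.one_apply]
    split_ifs <;> simp [mul_comm]
  have hadj : ∀ l, W.adjugate.map (eval l) = (1 + l • Z).adjugate := by
    intro l
    rw [← hW l]
    exact (RingHom.map_adjugate (evalRingHom l) W)
  have hw : ∀ l, (fun j => ((W.adjugate.mulVec (fun j => C (v j))) j).eval l) =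
      (1 + l • Z).adjugate.mulVec v := by
    intro l
    rw [← hadj]
    ext j
    simp [Matrix.mulVec, dotProduct, eval_finsetSum]
  refine ⟨W.adjugate.mulVec (fun j => C (v j)), ?_, ?_⟩
  · intro j
    have := congrFun (hw 0) j
    simpa using this
  · intro l
    rw [hw l]
    have h1 : (1 + l • Z).mulVec ((1 + l • Z).adjugate.mulVec v) = (1 + l • Z).det • v := by
      rw [Matrix.mulVec_mulVec, Matrix.mul_adjugate, Matrix.smul_mulVec, Matrix.one_mulVec]
    set u := (1 + l • Z).adjugate.mulVec v
    have h2 : (1 + l • Z).mulVec u = S.symm (T u + l • T' u, ℓ u) := by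
      have h3 : Z.mulVec u = S.symm (T' u, 0) := by
        have := LinearMap.toMatrix'_mulVec (S.symm.toLinearMap ∘ₗ (T'.prod 0)) u
        rw [this]
        rfl
      rw [Matrix.add_mulVec, Matrix.one_mulVec, Matrix.smul_mulVec, h3, ← map_smul,
        LinearEquiv.eq_symm_apply, map_add, LinearEquiv.apply_symm_apply]
      change (T u, ℓ u) + l • (T' u, (0 : k)) = _
      ext <;> simp
    rw [h2, ← hSv, ← map_smul S.symm] at h1
    have h4 := congrArg Prod.fst (S.symm.injective h1)
    simpa using h4

end QRep

namespace QRep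
variable {k : Type} [Field k] {I E : Type} {s t : E → I} [Fintype I] [Fintype E] 

open Polynomial in
theorem generic (M : QRep k I E s t) (hM : M.Good) (h : ∀ e, M.V (s e) →ₗ[k] M.V (t e)) :
    ∃ p : k[X], p ≠ 0 ∧ ∀ l : k, p.eval l ≠ 0 →
      M.Iso ⟨M.V, fun e => M.f e + l • (h e - M.f e)⟩ := by
  classical
  let Φ := ∀ i, M.V i →ₗ[k] M.V i
  let b := Module.finBasis k Φ
  let T : (Fin (Module.finrank k Φ) → k) →ₗ[k] _ := dmap M.V M.f M.f ∘ₗ b.equivFun.symm.toLinearMap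
  let T' : (Fin (Module.finrank k Φ) → k) →ₗ[k] _ :=
    (dmap M.V 0 (fun e => h e - M.f e)) ∘ₗ b.equivFun.symm.toLinearMap
  let one : Φ := fun i => LinearMap.id
  have hone : one ≠ 0 := by
    intro h0
    apply hM.nontriv
    intro i
    refine ⟨fun x y => ?_⟩
    have h1 := fun x => LinearMap.congr_fun (congrFun h0 i) x
    exact (h1 x).trans (h1 y).symm
  obtain ⟨w, hw0, hw⟩ := curve T T' (hM.ext.comp b.equivFun.symm.surjective) (b.equivFun one)
    (by simpa using hone) (by simp [T, one]; ext e v; simp [dmap]) (by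
      intro u hu
      obtain ⟨c, hc⟩ := hM.scal (b.equivFun.symm u) (by
        intro e v
        have := LinearMap.congr_fun (congrFun hu e) v
        simpa only [T, dmap, sub_eq_zero, LinearMap.comp_apply, LinearEquiv.coe_coe, LinearMap.coe_mk, AddHom.coe_mk, LinearMap.sub_apply, Pi.zero_apply, LinearMap.zero_apply] using this)
      refine ⟨c, ?_⟩
      rw [← map_smul, ← LinearEquiv.symm_apply_eq]
      ext i : 1
      exact hc i)
  let φ : k → Φ := fun l => b.equivFun.symm (fun j => (w j).eval l)
  have hφ0 : φ 0 = one := by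
    simp only [φ, hw0]
    exact b.equivFun.symm_apply_apply one
  let G : ∀ i, Matrix (Fin (Module.finrank k (M.V i))) (Fin (Module.finrank k (M.V i))) k[X] :=
    fun i => ∑ j, w j • (LinearMap.toMatrix (Module.finBasis k (M.V i)) (Module.finBasis k (M.V i)) (b j i)).map
      (fun a => (C a : k[X]))
  have hG : ∀ i l, ((G i).det).eval l = LinearMap.det (φ l i) := by
    intro i l
    rw [← LinearMap.det_toMatrix (Module.finBasis k (M.V i))]
    have h1 := RingHom.map_det (evalRingHom l) (G i)
    simp only [coe_evalRingHom] at h1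
    rw [h1]
    congr 1
    ext a c
    have h2 : φ l i = ∑ j, (w j).eval l • b j i := by
      have h3 : φ l = ∑ j, (w j).eval l • b j := by
        simp only [φ, Module.Basis.equivFun_symm_apply]
      rw [h3]
      exact Finset.sum_apply i _ _
    rw [h2]
    simp [G, Matrix.sum_apply]
  have hp0 : (∏ i, (G i).det).eval 0 = 1 := by
    rw [eval_prod]
    apply Finset.prod_eq_one
    intro i _
    rw [hG, hφ0]
    simp [one]
  refine ⟨∏ i, (G i).det, fun h0 => ?_, fun l hl => ?_⟩
  · rw [h0] at hp0
    simp at hp0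
  · rw [eval_prod, Finset.prod_ne_zero_iff] at hl
    refine ⟨fun i => LinearEquiv.ofIsUnitDet (f := φ l i) (v := Module.finBasis k (M.V i))
      (v' := Module.finBasis k (M.V i)) ?_, ?_⟩
    · rw [LinearMap.det_toMatrix, ← hG]
      exact (hl i (Finset.mem_univ i)).isUnit
    · intro e v
      have h1 := LinearMap.congr_fun (congrFun (hw l) e) v
      change (φ l (t e) (M.f e v) - M.f e (φ l (s e) v)) + 
        l • (φ l (t e) 0 - (h e - M.f e) (φ l (s e) v)) = 0 at h1
      change φ l (t e) (M.f e v) = (M.f e + l • (h e - M.f e)) (φ l (s e) v)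
      rw [map_zero, zero_sub, smul_neg, ← sub_eq_add_neg, sub_sub, sub_eq_zero] at h1
      rw [h1]
      rfl

theorem Good.of_iso_same {M : QRep k I E s t} (h : ∀ e, M.V (s e) →ₗ[k] M.V (t e)) 
    (hM : M.Good) (hN : (⟨M.V, h⟩ : QRep k I E s t).Good) [Infinite k] :
    M.Iso ⟨M.V, h⟩ := by
  obtain ⟨p, hp, hp'⟩ := generic M hM h
  obtain ⟨p2, hp2, hp2'⟩ := generic ⟨M.V, h⟩ hN M.f
  have hc : p2.comp (1 - Polynomial.X) ≠ 0 := by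
    intro h0
    apply hp2
    have := congrArg (fun q => q.comp (1 - Polynomial.X)) h0
    simpa [Polynomial.comp_assoc] using this
  obtain ⟨l, hl⟩ : ∃ l, (p * p2.comp (1 - Polynomial.X)).eval l ≠ 0 := by
    by_contra hcon
    push Not at hcon
    exact mul_ne_zero hp hc (Polynomial.funext (by simpa using hcon))
  rw [Polynomial.eval_mul] at hl
  have h1 := hp' l (left_ne_zero_of_mul hl)
  have h2 := hp2' (1 - l) (by simpa using (right_ne_zero_of_mul hl))
  refine h1.trans' ?_
  refine Iso.symm' ?_
  convert h2 using 3 with e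
  simp only
  module

theorem Good.of_iso {M N : QRep k I E s t} (h : M.Iso N) (hN : N.Good) : M.Good := by
  obtain ⟨u, hu⟩ := h
  have hu' : ∀ e v, (u (t e)).symm (N.f e v) = M.f e ((u (s e)).symm v) := by
    intro e v
    rw [LinearEquiv.symm_apply_eq, hu]
    simp
  refine ⟨fun h0 => hN.nontriv fun i => ?_, fun φ hφ => ?_, fun η => ?_, ?_⟩
  · have := h0 i
    exact (u i).symm.toEquiv.subsingleton
  · obtain ⟨c, hc⟩ := hN.scal (fun i => (u i).toLinearMap ∘ₗ φ i ∘ₗ (u i).symm.toLinearMap) (by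
      intro e v
      simp [hu', hφ e, hu])
    refine ⟨c, fun i => ?_⟩
    ext v
    have := LinearMap.congr_fun (hc i) (u i v)
    apply (u i).injective
    simpa using this
  · obtain ⟨ψ, hψ⟩ := hN.ext (fun e => (u (t e)).toLinearMap ∘ₗ η e ∘ₗ (u (s e)).symm.toLinearMap)
    refine ⟨fun i => (u i).symm.toLinearMap ∘ₗ ψ i ∘ₗ (u i).toLinearMap, ?_⟩
    ext e v
    have := LinearMap.congr_fun (congrFun hψ e) (u (s e) v)
    apply (u (t e)).injective
    simp [dmap] at this ⊢
    rw [hu, ← this, hu]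
    simp
  · have : M.dimVec = N.dimVec := by
      ext i
      exact (u i).finrank_eq
    rw [this, hN.q]

theorem good_unique [Infinite k] {M N : QRep k I E s t} (hM : M.Good) (hN : N.Good)
    (h : M.dimVec = N.dimVec) : M.Iso N := by
  have hu : ∀ i, Nonempty (M.V i ≃ₗ[k] N.V i) := fun i =>
    FiniteDimensional.nonempty_linearEquiv_of_finrank_eq (congrFun h i)
  let u := fun i => (hu i).some
  have h1 : Iso ⟨M.V, fun e => (u (t e)).symm.toLinearMap ∘ₗ N.f e ∘ₗ (u (s e)).toLinearMap⟩ N := by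
    refine ⟨u, fun e v => ?_⟩
    simp
  exact (Good.of_iso_same _ hM (Good.of_iso h1 hN)).trans' h1

theorem finiteRepType_of_tits [IsAlgClosed k] (hq : ∀ d : I → ℕ, d ≠ 0 → 0 < titsQ s t d)
    (hf : {d : I → ℕ | titsQ s t d = 1}.Finite) : FiniteRepType k I E s t := by
  classical
  have : Infinite k := IsAlgClosed.instInfinite
  have := hf.to_subtype
  obtain ⟨n, ⟨ε⟩⟩ := Finite.exists_equiv_fin {d : I → ℕ | titsQ s t d = 1}
  refine ⟨n, fun a => if h : ∃ M : QRep k I E s t, M.Good ∧ M.dimVec = (ε.symm a).1 then h.choose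
    else zero k I E s t, fun M hM => ?_⟩
  have hG := good_of_indecI hq _ M hM.indecI rfl
  refine ⟨ε ⟨M.dimVec, hG.q⟩, ?_⟩
  have hex : ∃ N : QRep k I E s t, N.Good ∧ N.dimVec = (ε.symm (ε ⟨M.dimVec, hG.q⟩)).1 :=
    ⟨M, hG, by simp⟩
  simp only
  rw [dif_pos hex]
  refine good_unique hG hex.choose_spec.1 ?_
  rw [hex.choose_spec.2]
  simp

end QRep

namespace QRep
variable {k : Type} [Field k] {I E : Type} {s t : E → I}

theorem fin_iso [Fintype I] (h : FiniteRepType k I E s t) (N : ℕ) :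
    ∃ S : Set (QRep k I E s t), S.Finite ∧ ∀ M : QRep k I E s t, ∑ i, M.dimVec i ≤ N →
      ∃ G ∈ S, M.Iso G := by
  obtain ⟨n, F, hF⟩ := h
  have htriv : ∀ M : QRep k I E s t, M.IsTrivial → M.Iso (zero k I E s t) := by
    intro M hM
    have : ∀ i, Subsingleton (M.V i) := hM
    refine ⟨fun i => ⟨0, 0, fun x => Subsingleton.elim _ _, fun x => rfl⟩, fun e v => rfl⟩
  have hpos : ∀ M : QRep k I E s t, ¬ M.IsTrivial → 0 < ∑ i, M.dimVec i := by
    intro M hM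
    rw [Nat.pos_iff_ne_zero]
    intro h0
    apply hM
    intro i
    rw [Finset.sum_eq_zero_iff] at h0
    exact Module.finrank_zero_iff.1 (h0 i (Finset.mem_univ i))
  induction N with
  | zero =>
    refine ⟨{zero k I E s t}, Set.finite_singleton _, fun M hM => ⟨_, rfl, htriv M ?_⟩⟩
    by_contra hcon
    have := hpos M hcon
    omega
  | succ N ih =>
    obtain ⟨S, hS, hSM⟩ := ih
    refine ⟨{zero k I E s t} ∪ Set.range F ∪ Set.image2 dsum S S,
      ((Set.finite_singleton _).union (Set.finite_range F)).union (hS.image2 _ hS), fun M hM => ?_⟩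
    by_cases h1 : M.IsTrivial
    · exact ⟨_, Or.inl (Or.inl rfl), htriv M h1⟩
    by_cases h2 : M.Indecomposable
    · obtain ⟨a, ha⟩ := hF M h2
      exact ⟨F a, Or.inl (Or.inr ⟨a, rfl⟩), ha⟩
    unfold Indecomposable at h2
    push Not at h2
    obtain ⟨A, B, hA, hB, hAB⟩ := h2 h1
    have hd : ∑ i, M.dimVec i = ∑ i, A.dimVec i + ∑ i, B.dimVec i := by
      rw [← Finset.sum_add_distrib]
      refine Finset.sum_congr rfl fun i _ => ?_
      obtain ⟨φ, -⟩ := hAB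
      exact (φ i).finrank_eq.trans (Module.finrank_prod)
    have hA' := hpos A hA
    have hB' := hpos B hB
    obtain ⟨G, hG, hAG⟩ := hSM A (by omega)
    obtain ⟨G', hG', hBG⟩ := hSM B (by omega)
    exact ⟨_, Or.inr ⟨G, hG, G', hG', rfl⟩, hAB.trans' (hAG.dsum' hBG)⟩

/-- The representation given by matrices. -/
def mkRep (d : I → ℕ) (y : ∀ e : E, Matrix (Fin (d (t e))) (Fin (d (s e))) k) :
    QRep k I E s t where
  V i := Fin (d i) → k
  f e := Matrix.toLin' (y e)

theorem mkRep_iso {d : I → ℕ} {y y' : ∀ e : E, Matrix (Fin (d (t e))) (Fin (d (s e))) k}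
    (h : (mkRep d y).Iso (mkRep d y')) : ∃ g : ∀ i, Matrix (Fin (d i)) (Fin (d i)) k,
      (∀ i, IsUnit (g i).det) ∧ ∀ e, g (t e) * y e = y' e * g (s e) := by
  obtain ⟨φ, hφ⟩ := h
  let φ' : ∀ i, (Fin (d i) → k) ≃ₗ[k] (Fin (d i) → k) := φ
  refine ⟨fun i => LinearMap.toMatrix' (φ' i).toLinearMap, fun i => ?_, fun e => ?_⟩
  · rw [LinearMap.det_toMatrix']
    exact LinearEquiv.isUnit_det' (φ' i)
  · apply Matrix.toLin'.injective
    rw [Matrix.toLin'_mul, Matrix.toLin'_mul, Matrix.toLin'_toMatrix', Matrix.toLin'_toMatrix']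
    exact LinearMap.ext (hφ e)

open MvPolynomial in
theorem vanish [Fintype I] [Fintype E] (d : I → ℕ)
    (hd : titsQ s t d ≤ 0)
    (y₀ : ∀ e : E, Matrix (Fin (d (t e))) (Fin (d (s e))) k)
    (p₀ : Σ i : I, Fin (d i) × Fin (d i)) :
    ∃ P : MvPolynomial (Σ e : E, Fin (d (t e)) × Fin (d (s e))) k, P ≠ 0 ∧
      ∀ g : ∀ i, Matrix (Fin (d i)) (Fin (d i)) k, (∀ i, IsUnit (g i).det) →
        g p₀.1 p₀.2.1 p₀.2.2 = 1 →
        ∀ y : ∀ e : E, Matrix (Fin (d (t e))) (Fin (d (s e))) k,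
          (∀ e, g (t e) * y e = y₀ e * g (s e)) →
          eval (fun r : Σ e : E, Fin (d (t e)) × Fin (d (s e)) => y r.1 r.2.1 r.2.2) P = 0 := by
  classical
  let P' := {p : Σ i : I, Fin (d i) × Fin (d i) // p ≠ p₀}
  let A := MvPolynomial P' k
  let gu : ∀ i, Matrix (Fin (d i)) (Fin (d i)) A := fun i => Matrix.of fun a b =>
    if h : (⟨i, (a, b)⟩ : Σ i : I, Fin (d i) × Fin (d i)) = p₀ then 1 else X ⟨_, h⟩
  let δ : A := ∏ i, (gu i).det
  let ev : (∀ i, Matrix (Fin (d i)) (Fin (d i)) k) → A →ₐ[k] k := fun g =>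
    aeval (fun p : P' => g p.1.1 p.1.2.1 p.1.2.2)
  have hev : ∀ g : (∀ i, Matrix (Fin (d i)) (Fin (d i)) k), g p₀.1 p₀.2.1 p₀.2.2 = 1 →
      ∀ i, (gu i).map (ev g) = g i := by
    intro g hg i
    ext a b
    simp only [Matrix.map_apply, gu, Matrix.of_apply]
    split_ifs with h
    · subst h
      simpa using hg.symm
    · exact aeval_X _ _
  have hevδ : ∀ g : (∀ i, Matrix (Fin (d i)) (Fin (d i)) k), g p₀.1 p₀.2.1 p₀.2.2 = 1 →
      ev g δ = ∏ i, (g i).det := by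
    intro g hg
    simp only [δ, map_prod]
    refine Finset.prod_congr rfl fun i _ => ?_
    rw [AlgHom.map_det]
    congr 1
    exact hev g hg i
  by_cases hδ : δ = 0
  · refine ⟨1, one_ne_zero, fun g hg hg1 => ?_⟩
    have := hevδ g hg1
    rw [hδ, map_zero] at this
    obtain ⟨i, -, hi⟩ := Finset.prod_eq_zero_iff.1 this.symm
    exact absurd hi (hg i).ne_zero
  let L := Localization.Away δ
  have hM : Submonoid.powers δ ≤ nonZeroDivisors A := powers_le_nonZeroDivisors_of_noZeroDivisors hδ
  have : IsDomain L := IsLocalization.isDomain_of_le_nonZeroDivisors L hM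
  have hinj : Function.Injective (algebraMap A L) := IsLocalization.injective L hM
  have : FaithfulSMul A L := (faithfulSMul_iff_algebraMap_injective A L).2 hinj
  have halg : Algebra.IsAlgebraic A L := IsLocalization.isAlgebraic L (Submonoid.powers δ)
  have htr : Algebra.trdeg k L = Cardinal.mk P' := by
    rw [← trdeg_add_eq k A (A := L), trdeg_eq_zero (R := A) (A := L), add_zero]
    exact MvPolynomial.trdeg_of_isDomain.trans (Cardinal.lift_id _)
  let gL : ∀ i, Matrix (Fin (d i)) (Fin (d i)) L := fun i => (gu i).map (algebraMap A L)
  have hgL : ∀ i, IsUnit (gL i).det := by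
    intro i
    have h1 : IsUnit (algebraMap A L δ) := IsLocalization.Away.algebraMap_isUnit δ
    simp only [δ, map_prod] at h1
    have h2 := isUnit_of_dvd_unit (Finset.dvd_prod_of_mem _ (Finset.mem_univ i)) h1
    rwa [RingHom.map_det] at h2
  let Z : ∀ e, Matrix (Fin (d (t e))) (Fin (d (s e))) L := fun e =>
    (gL (t e))⁻¹ * ((y₀ e).map (algebraMap k L)) * gL (s e)
  have hZ : ∀ e, gL (t e) * Z e = ((y₀ e).map (algebraMap k L)) * gL (s e) := by
    intro e
    simp only [Z]
    rw [← Matrix.mul_assoc, ← Matrix.mul_assoc, Matrix.mul_nonsing_inv _ (hgL _), Matrix.one_mul]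
  let z : (Σ e : E, Fin (d (t e)) × Fin (d (s e))) → L := fun r => Z r.1 r.2.1 r.2.2
  have hnot : ¬ AlgebraicIndependent k z := by
    intro hz
    have h1 := hz.cardinalMk_le_trdeg
    rw [htr, Cardinal.mk_fintype, Cardinal.mk_fintype, Nat.cast_le] at h1
    have h2 : Fintype.card P' < Fintype.card (Σ i : I, Fin (d i) × Fin (d i)) :=
      Fintype.card_subtype_lt (x := p₀) (by simp)
    simp only [Fintype.card_sigma, Fintype.card_prod, Fintype.card_fin] at h1 h2
    have h3 : titsQ s t d = (∑ i, d i * d i : ℕ) - (∑ e, d (t e) * d (s e) : ℕ) := by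
      simp [titsQ, mul_comm]
    omega
  rw [algebraicIndependent_iff] at hnot
  push Not at hnot
  obtain ⟨P, hP, hP0⟩ := hnot
  refine ⟨P, hP0, fun g hg hg1 y hy => ?_⟩
  have hu : ∀ x : Submonoid.powers δ, IsUnit (ev g x) := by
    rintro ⟨_, n, rfl⟩
    simp only [map_pow]
    rw [hevδ g hg1]
    apply IsUnit.pow
    rw [isUnit_iff_ne_zero, Finset.prod_ne_zero_iff]
    exact fun i _ => (hg i).ne_zero
  let evL : L →ₐ[k] k := IsLocalization.liftAlgHom (M := Submonoid.powers δ) (f := ev g) hu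
  have hevL : ∀ a, evL (algebraMap A L a) = ev g a := by
    intro a
    simp only [evL, IsLocalization.coe_liftAlgHom]
    exact IsLocalization.lift_eq _ a
  have hgLev : ∀ i, (gL i).map evL = g i := by
    intro i
    rw [← hev g hg1 i]
    ext a b
    simp [gL, hevL]
  have hZy : ∀ e, (Z e).map evL = y e := by
    intro e
    have h1 := congrArg (fun m => m.map evL) (hZ e)
    simp only [Matrix.map_mul, hgLev] at h1
    have h2 : ((y₀ e).map (algebraMap k L)).map evL = y₀ e := by
      ext a b
      simp
    rw [h2, ← hy e] at h1
    have h3 := congrArg (fun m => (g (t e))⁻¹ * m) h1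
    simpa only [← Matrix.mul_assoc, Matrix.nonsing_inv_mul _ (hg (t e)), Matrix.one_mul] using h3
  have h4 := congrArg evL hP
  rw [map_zero, ← AlgHom.comp_apply, MvPolynomial.comp_aeval] at h4
  have hfun : (fun r => evL (z r)) = fun r => y r.1 r.2.1 r.2.2 :=
    funext fun r => congrFun (congrFun (hZy r.1) r.2.1) r.2.2
  rw [hfun] at h4
  simpa [MvPolynomial.coe_aeval_eq_eval] using h4

theorem tits_pos_of_finite [Infinite k] [Fintype I] [Fintype E] (h : FiniteRepType k I E s t)
    (d : I → ℕ) (hd : d ≠ 0) : 0 < titsQ s t d := by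
  classical
  by_contra hcon
  rw [not_lt] at hcon
  obtain ⟨S, hS, hSM⟩ := fin_iso h (∑ i, d i)
  let Y := ∀ e : E, Matrix (Fin (d (t e))) (Fin (d (s e))) k
  let S' : Set (QRep k I E s t) := {G ∈ S | ∃ y : Y, (mkRep d y).Iso G}
  have hS' : S'.Finite := hS.subset fun _ h => h.1
  have : Fintype S' := hS'.fintype
  let y₀ : S' → Y := fun G => G.2.2.choose
  have hy₀ : ∀ G : S', (mkRep d (y₀ G)).Iso G.1 := fun G => G.2.2.choose_spec
  choose P hP0 hP using fun (G : S') p₀ => vanish d hcon (y₀ G) p₀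
  have hprod : ∏ G : S', ∏ p₀, P G p₀ ≠ 0 := by
    rw [Finset.prod_ne_zero_iff]
    intro G _
    rw [Finset.prod_ne_zero_iff]
    intro p₀ _
    exact hP0 G p₀
  obtain ⟨x, hx⟩ : ∃ x, MvPolynomial.eval x (∏ G : S', ∏ p₀, P G p₀) ≠ 0 := by
    by_contra hc
    push Not at hc
    exact hprod (MvPolynomial.funext (by simpa using hc))
  let y : Y := fun e => Matrix.of fun a b => x ⟨e, (a, b)⟩
  obtain ⟨G, hG, hyG⟩ := hSM (mkRep d y) (by
    refine Finset.sum_le_sum fun i _ => ?_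
    change Module.finrank k (Fin (d i) → k) ≤ d i
    simp)
  let G' : S' := ⟨G, hG, y, hyG⟩
  obtain ⟨g, hg, hgy⟩ := mkRep_iso (hyG.trans' (hy₀ G').symm')
  obtain ⟨i, hi⟩ := Function.ne_iff.1 hd
  have hne : ∃ a b, g i a b ≠ 0 := by
    by_contra hc
    push Not at hc
    have h0 : g i = 0 := by
      ext a b
      exact hc a b
    have := hg i
    have hne : Nonempty (Fin (d i)) := ⟨⟨0, Nat.pos_of_ne_zero hi⟩⟩
    rw [h0, Matrix.det_zero] at this
    exact not_isUnit_zero this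
  obtain ⟨a, b, hab⟩ := hne
  simp only [map_prod] at hx
  rw [Finset.prod_ne_zero_iff] at hx
  have hx2 := hx G' (Finset.mem_univ _)
  rw [Finset.prod_ne_zero_iff] at hx2
  apply hx2 ⟨i, (a, b)⟩ (Finset.mem_univ _)
  have := hP G' ⟨i, (a, b)⟩ (fun j => (g i a b)⁻¹ • g j) (fun j => ?_) ?_ y ?_
  · exact this
  · rw [Matrix.det_smul]
    exact (((inv_ne_zero hab).isUnit).pow _).mul (hg j)
  · simp [hab]
  · intro e
    simp [hgy]

end QRep


/-- Twice the Tits form of a multigraph. -/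
def BF {α : Type} [Fintype α] (c : α → α → ℕ) (x : α → ℤ) : ℤ :=
  2 * ∑ i, x i * x i - ∑ i, ∑ j, (c i j : ℤ) * (x i * x j)

/-- Coercivity of the form. -/
def Coer {α : Type} [Fintype α] (c : α → α → ℕ) : Prop :=
  ∃ C : ℤ, 0 < C ∧ ∀ (x : α → ℤ) i, x i * x i ≤ C * BF c x

theorem BF_pull {α β : Type} [Fintype α] [Fintype β] (c : β → β → ℕ) (f : α → β)
    (hf : Function.Injective f) (x : α → ℤ) :
    BF c (Function.extend f x 0) = BF (fun i j => c (f i) (f j)) x := by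
  classical
  have key : ∀ g : β → ℤ, (∀ b, b ∉ Set.range f → g b = 0) → ∑ b, g b = ∑ a, g (f a) := by
    intro g hg
    rw [← Finset.sum_image (s := Finset.univ) (g := f) (f := g) (fun a _ b _ h => hf h)]
    symm
    apply Finset.sum_subset (Finset.subset_univ _)
    intro b _ hb
    apply hg
    simpa using hb
  have h0 : ∀ b, b ∉ Set.range f → Function.extend f x 0 b = 0 := by
    intro b hb
    rw [Function.extend_apply' _ _ _ (by simpa using hb)]
    rfl
  unfold BF
  rw [key _ (fun b hb => by rw [h0 b hb, zero_mul]),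
    key _ (fun b hb => by simp [h0 b hb])]
  congr 1
  · simp [hf.extend_apply]
  · refine Finset.sum_congr rfl fun a _ => ?_
    rw [key _ (fun b hb => by simp [h0 b hb])]
    simp [hf.extend_apply]

theorem Coer.pull {α β : Type} [Fintype α] [Fintype β] {c : β → β → ℕ} (h : Coer c) (f : α → β)
    (hf : Function.Injective f) : Coer (fun i j => c (f i) (f j)) := by
  obtain ⟨C, hC, h⟩ := h
  refine ⟨C, hC, fun x i => ?_⟩
  have := h (Function.extend f x 0) (f i)
  rwa [BF_pull c f hf, hf.extend_apply] at this

theorem Coer.iso {α β : Type} [Fintype α] [Fintype β] {c : α → α → ℕ} {d : β → β → ℕ} (h : Coer d)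
    (hi : IsGraphIso c d) : Coer c := by
  obtain ⟨e, he⟩ := hi
  have := h.pull e e.injective
  have hc : c = fun i j => d (e i) (e j) := by
    funext i j
    exact he i j
  rwa [hc]

theorem seg_sum (N m : ℕ) (hm : m < N) (X : ℕ → ℤ) :
    ∑ i ∈ Finset.range N, ∑ j ∈ Finset.range N, (segCount m i j : ℤ) * (X i * X j)
      = 2 * ∑ i ∈ Finset.range m, X i * X (i + 1) := by
  have h1 : ∀ i j, (segCount m i j : ℤ) * (X i * X j) =
      (if i + 1 = j ∧ j ≤ m then X i * X j else 0) + (if j + 1 = i ∧ i ≤ m then X j * X i else 0) := by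
    intro i j
    unfold segCount
    split_ifs <;> first | omega | (push_cast; ring)
  have h2 : ∑ i ∈ Finset.range N, ∑ j ∈ Finset.range N,
      (if i + 1 = j ∧ j ≤ m then X i * X j else 0) = ∑ i ∈ Finset.range m, X i * X (i + 1) := by
    have h3 : ∀ i ∈ Finset.range N, ∑ j ∈ Finset.range N,
      (if i + 1 = j ∧ j ≤ m then X i * X j else 0) = if i < m then X i * X (i + 1) else 0 := by
      intro i _
      split_ifs with h
      · rw [Finset.sum_eq_single (i + 1)]
        · rw [if_pos ⟨rfl, h⟩]
        · intro b _ hb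
          rw [if_neg]
          omega
        · intro hb
          simp at hb
          omega
      · refine Finset.sum_eq_zero fun j _ => ?_
        rw [if_neg]
        omega
    rw [Finset.sum_congr rfl h3, ← Finset.sum_filter]
    congr 1
    ext i
    simp
    omega
  simp_rw [h1, Finset.sum_add_distrib]
  rw [h2, Finset.sum_comm, h2]
  ring

theorem edge_sum (N a b : ℕ) (ha : a < N) (hb : b < N) (hab : a ≠ b) (X : ℕ → ℤ) :
    ∑ i ∈ Finset.range N, ∑ j ∈ Finset.range N, (edgeInd a b i j : ℤ) * (X i * X j)
      = 2 * (X a * X b) := by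
  have h1 : ∀ i j, (edgeInd a b i j : ℤ) * (X i * X j) =
      (if i = a then (if j = b then X a * X b else 0) else 0) +
      (if i = b then (if j = a then X a * X b else 0) else 0) := by
    intro i j
    unfold edgeInd
    split_ifs <;> first | omega | (subst_vars; push_cast; ring)
  simp_rw [h1, Finset.sum_add_distrib]
  simp [Finset.sum_ite_eq', ha, hb, Finset.sum_ite_irrel]
  ring

/-- extension of a vector by zero -/
def exN {n : ℕ} (x : Fin n → ℤ) : ℕ → ℤ := fun i => if h : i < n then x ⟨i, h⟩ else 0

theorem exN_coe {n : ℕ} (x : Fin n → ℤ) (i : Fin n) : exN x i = x i := by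
  simp [exN]

theorem BF_range {n : ℕ} (c : ℕ → ℕ → ℕ) (x : Fin n → ℤ) :
    BF (fun i j : Fin n => c i j) x = 2 * ∑ i ∈ Finset.range n, exN x i * exN x i -
      ∑ i ∈ Finset.range n, ∑ j ∈ Finset.range n, (c i j : ℤ) * (exN x i * exN x j) := by
  unfold BF
  rw [Finset.sum_range, Finset.sum_range]
  simp_rw [Finset.sum_range, exN_coe]

theorem chain (m : ℕ) : ∃ C : ℤ, 0 < C ∧ ∀ X : ℕ → ℤ, ∀ j ≤ m, X j * X j ≤
    C * (∑ i ∈ Finset.range m, (X i - X (i + 1)) * (X i - X (i + 1)) + X m * X m) := by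
  induction m with
  | zero =>
    refine ⟨1, one_pos, fun X j hj => ?_⟩
    obtain rfl : j = 0 := by omega
    simp
  | succ m ih =>
    obtain ⟨C, hC, ih⟩ := ih
    refine ⟨2 * C + 2, by omega, fun X j hj => ?_⟩
    rw [Finset.sum_range_succ']
    set S := ∑ i ∈ Finset.range m, (X (i + 1) - X (i + 1 + 1)) * (X (i + 1) - X (i + 1 + 1))
      + X (m + 1) * X (m + 1) with hS
    have hS0 : 0 ≤ S := by
      refine add_nonneg (Finset.sum_nonneg fun i _ => mul_self_nonneg _) (mul_self_nonneg _)
    have ih' := fun j hj => ih (fun i => X (i + 1)) j hj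
    simp only [← hS] at ih'
    have e1 : ∑ i ∈ Finset.range m, (X (i + 1) - X (i + 1 + 1)) * (X (i + 1) - X (i + 1 + 1)) +
      (X 0 - X (0 + 1)) * (X 0 - X (0 + 1)) + X (m + 1) * X (m + 1)
      = S + (X 0 - X 1) * (X 0 - X 1) := by
      rw [hS]; ring
    rw [e1]
    have hd := mul_self_nonneg (X 0 - X 1)
    have hCS := mul_nonneg hC.le hS0
    have hCd := mul_nonneg hC.le hd
    rcases j with _ | j
    · have := ih' 0 (by omega)
      simp only [zero_add] at this
      nlinarith [mul_self_nonneg (X 0 - 2 * X 1)]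
    · have := ih' j (by omega)
      nlinarith

theorem path_id (m : ℕ) (X : ℕ → ℤ) :
    2 * ∑ i ∈ Finset.range (m + 1), X i * X i - 2 * ∑ i ∈ Finset.range m, X i * X (i + 1) =
      X 0 * X 0 + (∑ i ∈ Finset.range m, (X i - X (i + 1)) * (X i - X (i + 1)) + X m * X m) := by
  induction m with
  | zero => simp; ring
  | succ m ih =>
    rw [Finset.sum_range_succ _ (m + 1), Finset.sum_range_succ (fun i => X i * X (i + 1)) m,
      Finset.sum_range_succ (fun i => (X i - X (i + 1)) * (X i - X (i + 1))) m]
    linarith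

theorem coer_a (n : ℕ) (hn : 1 ≤ n) : Coer (aCount n) := by
  obtain ⟨m, rfl⟩ : ∃ m, n = m + 1 := ⟨n - 1, by omega⟩
  obtain ⟨C, hC, h⟩ := chain m
  refine ⟨C, hC, fun x i => ?_⟩
  have h1 := BF_range (segCount m) x
  rw [seg_sum _ _ (by omega), path_id] at h1
  have h2 := h (exN x) i (by omega)
  rw [exN_coe] at h2
  change _ ≤ C * BF (fun i j : Fin (m + 1) => segCount m i j) x
  rw [h1]
  nlinarith [mul_nonneg hC.le (mul_self_nonneg (exN x 0))]

theorem coer_d (n : ℕ) (hn : 4 ≤ n) : Coer (dCount n) := by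
  obtain ⟨m, rfl⟩ : ∃ m, n = m + 3 := ⟨n - 3, by omega⟩
  obtain ⟨C, hC, h⟩ := chain m
  refine ⟨4 * C + 4, by omega, fun x i => ?_⟩
  have h1 := BF_range (fun i j => segCount (m + 1) i j + edgeInd 1 (m + 2) i j) x
  simp_rw [Nat.cast_add, add_mul, Finset.sum_add_distrib] at h1
  rw [seg_sum _ _ (by omega), edge_sum _ _ _ (by omega) (by omega) (by omega),
    Finset.sum_range_succ] at h1
  change _ ≤ (4 * C + 4) * BF (fun i j : Fin (m + 3) =>
    segCount (m + 1) i j + edgeInd 1 (m + 2) i j) x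
  rw [h1, ← exN_coe x i]
  set X := exN x
  rw [Finset.sum_range_succ' _ (m + 1), Finset.sum_range_succ' (fun i => X i * X (i + 1)) m]
  have h2 := path_id m (fun i => X (i + 1))
  have h3 := h (fun i => X (i + 1))
  set S := ∑ i ∈ Finset.range m, (X (i + 1) - X (i + 1 + 1)) * (X (i + 1) - X (i + 1 + 1))
      + X (m + 1) * X (m + 1) with hS
  have hS0 : 0 ≤ S := by
    refine add_nonneg (Finset.sum_nonneg fun i _ => mul_self_nonneg _) (mul_self_nonneg _)
  have hc := h3 0 (by omega)
  simp only [zero_add] at hc h2 ⊢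
  have hT : 2 * (2 * (∑ k ∈ Finset.range (m + 1), X (k + 1) * X (k + 1) + X 0 * X 0
     + X (m + 2) * X (m + 2)) - (2 * (∑ k ∈ Finset.range m, X (k + 1) * X (k + 1 + 1) + X 0 * X 1)
     + 2 * (X 1 * X (m + 2)))) = (2 * X 0 - X 1) * (2 * X 0 - X 1) +
      (2 * X (m + 2) - X 1) * (2 * X (m + 2) - X 1) + 2 * S := by
    linarith
  set T := 2 * (∑ k ∈ Finset.range (m + 1), X (k + 1) * X (k + 1) + X 0 * X 0
     + X (m + 2) * X (m + 2)) - (2 * (∑ k ∈ Finset.range m, X (k + 1) * X (k + 1 + 1) + X 0 * X 1)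
     + 2 * (X 1 * X (m + 2)))
  have ha := mul_self_nonneg (2 * X 0 - X 1)
  have hb := mul_self_nonneg (2 * X (m + 2) - X 1)
  have hST : S ≤ T := by linarith
  have hCST := mul_le_mul_of_nonneg_left hST hC.le
  have hCS := mul_nonneg hC.le hS0
  obtain hi | hi | ⟨j, hi, hj⟩ : (i : ℕ) = 0 ∨ (i : ℕ) = m + 2 ∨ ∃ j ≤ m, (i : ℕ) = j + 1 := by
    have := i.2
    rcases Nat.eq_zero_or_pos (i : ℕ) with h | h
    · exact Or.inl h
    · by_cases h' : (i : ℕ) = m + 2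
      · exact Or.inr (Or.inl h')
      · exact Or.inr (Or.inr ⟨i - 1, by omega, by omega⟩)
  · rw [hi]
    nlinarith [mul_self_nonneg (2 * X 0 - 2 * X 1)]
  · rw [hi]
    nlinarith [mul_self_nonneg (2 * X (m + 2) - 2 * X 1)]
  · rw [hj]
    have := h3 j hi
    nlinarith

theorem coer_e8 : Coer (eCount 8) := by
  refine ⟨1000, by norm_num, fun x i => ?_⟩
  have h1 := BF_range (fun i j => segCount 6 i j + edgeInd 2 7 i j) x
  simp_rw [Nat.cast_add, add_mul, Finset.sum_add_distrib] at h1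
  rw [seg_sum _ _ (by omega), edge_sum _ _ _ (by omega) (by omega) (by omega)] at h1
  change _ ≤ 1000 * BF (fun i j : Fin 8 => segCount 6 i j + edgeInd 2 7 i j) x
  rw [h1, ← exN_coe x i]
  simp only [Finset.sum_range_succ, Finset.sum_range_zero]
  norm_num only
  set X := exN x
  set T := 2 * (0 + X 0 * X 0 + X 1 * X 1 + X 2 * X 2 + X 3 * X 3 + X 4 * X 4 + X 5 * X 5 + X 6 * X 6
     + X 7 * X 7) - (2 * (0 + X 0 * X 1 + X 1 * X 2 + X 2 * X 3 + X 3 * X 4 + X 4 * X 5 + X 5 * X 6)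
     + 2 * (X 2 * X 7)) with hT
  have key : 60 * T = 30 * (2 * X 7 - X 2) ^ 2 + 30 * (2 * X 0 - X 1) ^ 2 +
      10 * (3 * X 1 - 2 * X 2) ^ 2 + 30 * (2 * X 6 - X 5) ^ 2 + 10 * (3 * X 5 - 2 * X 4) ^ 2 +
      5 * (4 * X 4 - 3 * X 3) ^ 2 + 3 * (5 * X 3 - 4 * X 2) ^ 2 + 2 * X 2 ^ 2 := by
    rw [hT]; ring
  clear_value T
  clear hT h1
  have b1 := sq_nonneg (2 * X 7 - X 2)
  have b2 := sq_nonneg (2 * X 0 - X 1)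
  have b3 := sq_nonneg (3 * X 1 - 2 * X 2)
  have b4 := sq_nonneg (2 * X 6 - X 5)
  have b5 := sq_nonneg (3 * X 5 - 2 * X 4)
  have b6 := sq_nonneg (4 * X 4 - 3 * X 3)
  have b7 := sq_nonneg (5 * X 3 - 4 * X 2)
  have b8 := sq_nonneg (X 2)
  have c2 : X 2 * X 2 ≤ 30 * T := by linarith
  have c7 : X 7 * X 7 ≤ 30 * T := by linarith [sq_nonneg (X 7 - X 2)]
  have c1 : X 1 * X 1 ≤ 30 * T := by linarith [sq_nonneg (3 * X 1 - 4 * X 2)]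
  have c0 : X 0 * X 0 ≤ 30 * T := by linarith [sq_nonneg (2 * X 0 - 2 * X 1)]
  have c3 : X 3 * X 3 ≤ 42 * T := by linarith [sq_nonneg (5 * X 3 - 8 * X 2)]
  have c4 : X 4 * X 4 ≤ 52 * T := by linarith [sq_nonneg (4 * X 4 - 6 * X 3)]
  have c5 : X 5 * X 5 ≤ 60 * T := by linarith [sq_nonneg (3 * X 5 - 4 * X 4)]
  have c6 : X 6 * X 6 ≤ 60 * T := by linarith [sq_nonneg (2 * X 6 - 2 * X 5)]
  have hT0 : 0 ≤ T := by linarith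
  have : ∀ j < 8, X j * X j ≤ 1000 * T := by
    intro j hj
    interval_cases j <;> linarith
  exact this i i.2

theorem coer_e (n : ℕ) (hn : n = 6 ∨ n = 7 ∨ n = 8) : Coer (eCount n) := by
  rcases hn with rfl | rfl | rfl
  · have := coer_e8.pull (![0, 1, 2, 3, 4, 7] : Fin 6 → Fin 8) (by decide)
    have hc : eCount 6 = fun i j => eCount 8 ((![0, 1, 2, 3, 4, 7] : Fin 6 → Fin 8) i)
      ((![0, 1, 2, 3, 4, 7] : Fin 6 → Fin 8) j) := by decide
    rwa [hc]
  · have := coer_e8.pull (![0, 1, 2, 3, 4, 5, 7] : Fin 7 → Fin 8) (by decide)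
    have hc : eCount 7 = fun i j => eCount 8 ((![0, 1, 2, 3, 4, 5, 7] : Fin 7 → Fin 8) i)
      ((![0, 1, 2, 3, 4, 5, 7] : Fin 7 → Fin 8) j) := by decide
    rwa [hc]
  · exact coer_e8

theorem coer_of_ade {α : Type} [Fintype α] {c : α → α → ℕ} (h : IsADE c) : Coer c := by
  obtain ⟨n, hn, h⟩ | ⟨n, hn, h⟩ | ⟨n, hn, h⟩ := h
  · exact (coer_a n hn).iso h
  · exact (coer_d n hn).iso h
  · exact (coer_e n hn).iso h

theorem noloop_of_ade {α : Type} {c : α → α → ℕ} (h : IsADE c) (i : α) : c i i = 0 := by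
  obtain ⟨n, hn, e, h⟩ | ⟨n, hn, e, h⟩ | ⟨n, hn, e, h⟩ := h <;> rw [h]
  · simp [aCount, segCount]
  · simp [dCount, segCount, edgeInd]
    omega
  · simp [eCount, segCount, edgeInd]
    omega

theorem nonempty_of_ade {α : Type} {c : α → α → ℕ} (h : IsADE c) : Nonempty α := by
  obtain ⟨n, hn, e, h⟩ | ⟨n, hn, e, h⟩ | ⟨n, hn, e, h⟩ := h <;>
  exact ⟨e.symm ⟨0, by omega⟩⟩

theorem Coer.nonneg {α : Type} [Fintype α] {c : α → α → ℕ} (h : Coer c) (x : α → ℤ) :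
    0 ≤ BF c x := by
  obtain ⟨C, hC, h⟩ := h
  rcases isEmpty_or_nonempty α with h0 | ⟨⟨i⟩⟩
  · simp [BF]
  · have := h x i
    have h2 := mul_self_nonneg (x i)
    exact nonneg_of_mul_nonneg_right (h2.trans this) hC

theorem coer_of_disj {I : Type} [Fintype I] {c : I → I → ℕ} (h : IsDisjUnionADE c) : Coer c := by
  classical
  obtain ⟨σ, part, hp, h⟩ := h
  have hs : Function.Surjective part := fun s0 => by
    obtain ⟨x⟩ := nonempty_of_ade (h s0)
    exact ⟨x.1, x.2⟩
  have : Fintype σ := Fintype.ofSurjective part hs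
  have hco := fun s0 => coer_of_ade (h s0)
  have hBF : ∀ x : I → ℤ, BF c x = ∑ s0, BF (fun i j : {x : I // part x = s0} => c i.1 j.1)
      (fun i => x i.1) := by
    intro x
    unfold BF
    rw [Finset.mul_sum, ← Finset.sum_sub_distrib, ← (Equiv.sigmaFiberEquiv part).sum_comp,
      Fintype.sum_sigma]
    refine Finset.sum_congr rfl fun s0 _ => ?_
    rw [Finset.mul_sum, ← Finset.sum_sub_distrib]
    refine Finset.sum_congr rfl fun i _ => ?_
    simp only [Equiv.sigmaFiberEquiv_apply]
    congr 1
    rw [← Finset.sum_filter_of_ne (p := fun j => part j = s0)]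
    · exact Finset.sum_subtype _ (by simp) _
    · intro j _ hj
      have : c i j ≠ 0 := by
        intro h0
        simp [h0] at hj
      rw [← hp _ _ this]
      exact i.2
  choose C hC hC' using hco
  refine ⟨∑ s0, C s0 + 1, by have := Finset.sum_nonneg (s := Finset.univ) (fun s0 _ => (hC s0).le); omega, fun x i => ?_⟩
  have h1 := hC' (part i) (fun j => x j.1) ⟨i, rfl⟩
  have hnn : ∀ s0, 0 ≤ BF (fun i j : {x : I // part x = s0} => c i.1 j.1) (fun i => x i.1) :=
    fun s0 => (coer_of_ade (h s0)).nonneg _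
  have h2 : BF (fun i' j : {x : I // part x = part i} => c i'.1 j.1) (fun i => x i.1) ≤ BF c x := by
    rw [hBF]
    exact Finset.single_le_sum (f := fun s0 => BF (fun i j : {x : I // part x = s0} => c i.1 j.1)
      (fun i => x i.1)) (fun s0 _ => hnn s0) (Finset.mem_univ (part i))
  have h3 : C (part i) ≤ ∑ s0, C s0 + 1 := by
    have := Finset.single_le_sum (f := C) (fun s0 _ => (hC s0).le) (Finset.mem_univ (part i))
    omega
  refine h1.trans (mul_le_mul h3 h2 (hnn _) ((hC _).le.trans h3))

theorem noloop_of_disj {I : Type} {c : I → I → ℕ} (h : IsDisjUnionADE c) (i : I) : c i i = 0 := by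
  obtain ⟨σ, part, hp, h⟩ := h
  exact noloop_of_ade (h (part i)) ⟨i, rfl⟩

theorem disj_of_ade {I : Type} {c : I → I → ℕ} (h : IsADE c) : IsDisjUnionADE c := by
  refine ⟨Unit, fun _ => (), fun _ _ _ => rfl, fun s0 => ?_⟩
  have e : {x : I // (fun _ => () : I → Unit) x = s0} ≃ I := Equiv.subtypeUnivEquiv (fun _ => rfl)
  have he : ∀ x, (Equiv.subtypeUnivEquiv (p := fun x : I => (fun _ => () : I → Unit) x = s0)
    (fun _ => rfl)) x = x.1 := fun _ => rfl
  obtain ⟨n, hn, e, h⟩ | ⟨n, hn, e, h⟩ | ⟨n, hn, e, h⟩ := h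
  · exact Or.inl ⟨n, hn, (Equiv.subtypeUnivEquiv (fun _ => rfl)).trans e, fun i j => h _ _⟩
  · exact Or.inr (Or.inl ⟨n, hn, (Equiv.subtypeUnivEquiv (fun _ => rfl)).trans e, fun i j => h _ _⟩)
  · exact Or.inr (Or.inr ⟨n, hn, (Equiv.subtypeUnivEquiv (fun _ => rfl)).trans e, fun i j => h _ _⟩)

theorem quivCount_symm {I E : Type} (s t : E → I) (i j : I) : quivCount s t i j = quivCount s t j i := by
  unfold quivCount
  congr! 3
  tauto

theorem quivCount_ne {I E : Type} [Fintype E] (s t : E → I) (i j : I) : quivCount s t i j ≠ 0 ↔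
    ∃ e, (s e = i ∧ t e = j) ∨ (s e = j ∧ t e = i) := by
  unfold quivCount
  rw [Nat.card_ne_zero]
  constructor
  · rintro ⟨⟨e⟩, -⟩
    exact ⟨e.1, e.2⟩
  · rintro ⟨e, he⟩
    exact ⟨⟨e, he⟩, inferInstance⟩

theorem BF_quiv {I E : Type} [Fintype I] [Fintype E] (s t : E → I) (hl : ∀ e, s e ≠ t e)
    (x : I → ℤ) : BF (quivCount s t) x = 2 * (∑ i, x i * x i - ∑ e, x (s e) * x (t e)) := by
  classical
  have h1 : ∀ i j, (quivCount s t i j : ℤ) * (x i * x j) =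
    ∑ e, ((if i = s e then (if j = t e then x i * x j else 0) else 0) +
      (if i = t e then (if j = s e then x i * x j else 0) else 0)) := by
    intro i j
    unfold quivCount
    rw [Nat.card_eq_fintype_card, Fintype.card_subtype, Finset.card_filter]
    push_cast
    rw [Finset.sum_mul]
    refine Finset.sum_congr rfl fun e _ => ?_
    have := hl e
    split_ifs <;> simp_all <;> grind
  unfold BF
  simp_rw [h1]
  have h2 : ∑ i, ∑ j, ∑ e, ((if i = s e then (if j = t e then x i * x j else 0) else 0) +
      (if i = t e then (if j = s e then x i * x j else 0) else 0)) =
      ∑ e, ∑ i, ∑ j, ((if i = s e then (if j = t e then x i * x j else 0) else 0) +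
      (if i = t e then (if j = s e then x i * x j else 0) else 0)) := by
    rw [Finset.sum_comm]
    conv_rhs => rw [Finset.sum_comm]
    rw [Finset.sum_comm]
    exact Finset.sum_congr rfl fun i _ => Finset.sum_comm
  rw [h2, mul_sub, Finset.mul_sum (s := (Finset.univ : Finset E))]
  congr 1
  refine Finset.sum_congr rfl fun e _ => ?_
  simp [Finset.sum_add_distrib, Finset.sum_ite_irrel]
  ring

theorem finite_of_coer {k : Type} [Field k] [IsAlgClosed k] {I E : Type} [Fintype I] [Fintype E]
    (s t : E → I) (hc : Coer (quivCount s t)) (hl : ∀ i, quivCount s t i i = 0) :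
    FiniteRepType k I E s t := by
  have hl' : ∀ e, s e ≠ t e := by
    intro e he
    exact (quivCount_ne s t (s e) (s e)).2 ⟨e, Or.inl ⟨rfl, he.symm⟩⟩ (hl (s e))
  obtain ⟨C, hC, h⟩ := hc
  have h2 : ∀ d : I → ℕ, ∀ i, (d i : ℤ) * d i ≤ C * (2 * titsQ s t d) := by
    intro d i
    have := h (fun i => (d i : ℤ)) i
    rwa [BF_quiv s t hl'] at this
  apply QRep.finiteRepType_of_tits
  · intro d hd
    obtain ⟨i, hi⟩ := Function.ne_iff.1 hd
    have := h2 d i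
    have hi' : 0 < (d i : ℤ) := by
      have : d i ≠ 0 := hi
      omega
    have h3 : 0 < C * (2 * titsQ s t d) := (mul_pos hi' hi').trans_le this
    have := pos_of_mul_pos_right h3 hC.le
    omega
  · apply Set.Finite.subset (Set.Finite.pi (fun _ : I => Set.finite_Iic (2 * C).toNat))
    intro d hd i _
    have := h2 d i
    rw [show titsQ s t d = 1 from hd] at this
    simp only [Set.mem_Iic]
    have h3 : (d i : ℤ) ≤ d i * d i := by exact_mod_cast Nat.le_mul_self _
    omega


/-- weak positivity -/
def WP {α : Type} [Fintype α] (c : α → α → ℕ) : Prop :=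
  ∀ x : α → ℕ, x ≠ 0 → 0 < BF c (fun i => (x i : ℤ))

theorem WP.pull {α β : Type} [Fintype α] [Fintype β] {c : β → β → ℕ} (h : WP c) (f : α → β)
    (hf : Function.Injective f) : WP (fun i j => c (f i) (f j)) := by
  intro x hx
  have h1 := h (Function.extend f x 0) (by
    obtain ⟨i, hi⟩ := Function.ne_iff.1 hx
    refine Function.ne_iff.2 ⟨f i, ?_⟩
    rwa [hf.extend_apply])
  rw [← BF_pull c f hf]
  convert h1 using 2
  funext b
  by_cases hb : ∃ a, f a = b
  · obtain ⟨a, rfl⟩ := hb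
    simp [hf.extend_apply]
  · simp [Function.extend_apply' _ _ _ hb]

theorem IsGraphIso.tr {α β γ : Type} {c : α → α → ℕ} {d : β → β → ℕ} {g : γ → γ → ℕ}
    (h : IsGraphIso c d) (h' : IsGraphIso d g) : IsGraphIso c g := by
  obtain ⟨e, he⟩ := h
  obtain ⟨e', he'⟩ := h'
  exact ⟨e.trans e', fun i j => by rw [he, he']; rfl⟩

theorem IsGraphIso.sy {α β : Type} {c : α → α → ℕ} {d : β → β → ℕ}
    (h : IsGraphIso c d) : IsGraphIso d c := by
  obtain ⟨e, he⟩ := h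
  exact ⟨e.symm, fun i j => by rw [he]; simp⟩

theorem IsADE.iso {α β : Type} {c : α → α → ℕ} {d : β → β → ℕ} (h : IsADE d)
    (hi : IsGraphIso c d) : IsADE c := by
  obtain ⟨n, hn, h⟩ | ⟨n, hn, h⟩ | ⟨n, hn, h⟩ := h
  · exact Or.inl ⟨n, hn, hi.tr h⟩
  · exact Or.inr (Or.inl ⟨n, hn, hi.tr h⟩)
  · exact Or.inr (Or.inr ⟨n, hn, hi.tr h⟩)

theorem WP.iso {α β : Type} [Fintype α] [Fintype β] {c : α → α → ℕ} {d : β → β → ℕ} (h : WP d)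
    (hi : IsGraphIso c d) : WP c := by
  obtain ⟨e, he⟩ := hi
  have := h.pull e e.injective
  have hc : c = fun i j => d (e i) (e j) := by
    funext i j
    exact he i j
  rwa [hc]

theorem iso_of_fn (N : ℕ) (b b' : ℕ → ℕ → ℕ) (f : ℕ → ℕ) (hf : ∀ i < N, f i < N)
    (hi : ∀ i < N, ∀ j < N, f i = f j → i = j)
    (h : ∀ i < N, ∀ j < N, b i j = b' (f i) (f j)) :
    IsGraphIso (fun i j : Fin N => b i j) (fun i j : Fin N => b' i j) := by
  let F : Fin N → Fin N := fun i => ⟨f i, hf i i.2⟩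
  have hF : Function.Injective F := fun i j hij =>
    Fin.ext (hi i i.2 j j.2 (congrArg Fin.val hij))
  exact ⟨Equiv.ofBijective F (Finite.injective_iff_bijective.1 hF), fun i j => h i i.2 j j.2⟩

theorem WP.pull_fn {M N : ℕ} {b b' : ℕ → ℕ → ℕ} (hw : WP (fun i j : Fin M => b' i j)) (f : ℕ → ℕ)
    (hf : ∀ i < N, f i < M)
    (hi : ∀ i < N, ∀ j < N, f i = f j → i = j)
    (h : ∀ i < N, ∀ j < N, b i j = b' (f i) (f j)) : WP (fun i j : Fin N => b i j) := by
  let F : Fin N → Fin M := fun i => ⟨f i, hf i i.2⟩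
  have hF : Function.Injective F := fun i j hij =>
    Fin.ext (hi i i.2 j j.2 (congrArg Fin.val hij))
  have := hw.pull F hF
  have hc : (fun i j : Fin N => b i j) = fun i j => b' (F i) (F j) := by
    funext i j
    exact h i i.2 j j.2
  rwa [hc]

theorem BF_nat {n : ℕ} (c : ℕ → ℕ → ℕ) (X : ℕ → ℤ) :
    BF (fun i j : Fin n => c i j) (fun i => X i) = 2 * ∑ i ∈ Finset.range n, X i * X i -
      ∑ i ∈ Finset.range n, ∑ j ∈ Finset.range n, (c i j : ℤ) * (X i * X j) := by
  unfold BF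
  rw [Finset.sum_range, Finset.sum_range]
  simp_rw [Finset.sum_range]

/-- path `0..m` with extra vertex `m+1` attached to `p` -/
def br (m p : ℕ) (i j : ℕ) : ℕ := segCount m i j + edgeInd p (m + 1) i j

theorem not_e8t : ¬ WP (fun i j : Fin 9 => br 7 2 i j) := by
  intro h
  have := h ![2, 4, 6, 5, 4, 3, 2, 1, 3] (by decide)
  revert this
  decide

theorem not_e7t : ¬ WP (fun i j : Fin 8 => br 6 3 i j) := by
  intro h
  have := h ![1, 2, 3, 4, 3, 2, 1, 2] (by decide)
  revert this
  decide

theorem br_rev (m p : ℕ) (hp : p ≤ m) : IsGraphIso (fun i j : Fin (m + 2) => br m p i j)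
    (fun i j : Fin (m + 2) => br m (m - p) i j) := by
  refine iso_of_fn _ _ _ (fun i => if i = m + 1 then m + 1 else m - i) ?_ ?_ ?_
  · intro i hi
    split_ifs <;> omega
  · intro i hi j hj
    split_ifs <;> omega
  · intro i hi j hj
    simp only [br, segCount, edgeInd]
    grind

theorem br_ade_half (m p : ℕ) (hp : p ≤ m) (hp2 : p ≤ m - p) (hw : WP (fun i j : Fin (m + 2) => br m p i j)) :
    IsADE (fun i j : Fin (m + 2) => br m p i j) := by
  by_cases h0 : p = 0
  · refine Or.inl ⟨m + 2, by omega, (br_rev m p hp).tr ?_⟩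
    refine ⟨Equiv.refl _, fun i j => ?_⟩
    simp only [br, segCount, edgeInd, aCount, Equiv.refl_apply]
    grind
  by_cases h1 : p = 1
  · subst h1
    exact Or.inr (Or.inl ⟨m + 2, by omega, ⟨Equiv.refl _, fun i j => rfl⟩⟩)
  by_cases h2 : p = 2
  · subst h2
    by_cases hm : m ≤ 6
    · exact Or.inr (Or.inr ⟨m + 2, by omega, ⟨Equiv.refl _, fun i j => rfl⟩⟩)
    · exfalso
      refine not_e8t (hw.pull_fn (fun i => if i = 8 then m + 1 else i) ?_ ?_ ?_)
      · intro i hi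
        split_ifs <;> omega
      · intro i hi j hj
        split_ifs <;> omega
      · intro i hi j hj
        simp only [br, segCount, edgeInd]
        grind
  · exfalso
    refine not_e7t (hw.pull_fn (fun i => if i = 7 then m + 1 else i + (p - 3)) ?_ ?_ ?_)
    · intro i hi
      split_ifs <;> omega
    · intro i hi j hj
      split_ifs <;> omega
    · intro i hi j hj
      simp only [br, segCount, edgeInd]
      grind

theorem br_ade (m p : ℕ) (hp : p ≤ m) (hw : WP (fun i j : Fin (m + 2) => br m p i j)) :
    IsADE (fun i j : Fin (m + 2) => br m p i j) := by
  by_cases h : p ≤ m - p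
  · exact br_ade_half m p hp h hw
  · exact (br_ade_half m (m - p) (by omega) (by omega) (hw.iso (br_rev m p hp).sy)).iso (br_rev m p hp)

theorem attach (n : ℕ) (b : ℕ → ℕ → ℕ) (hb : ∀ i ≤ n, b i n = 0 ∧ b n i = 0)
    (c : Fin (n + 1) → Fin (n + 1) → ℕ)
    (hs : ∀ i j, c i j = c j i) (hl : ∀ i, c i i = 0) (hw : WP c)
    (hbase : ∀ i j : Fin n, c i.castSucc j.castSucc = b i j)
    (hp : ∃ p : Fin n, c p.castSucc (Fin.last n) ≠ 0)
    (R : ℕ → ℕ) (hR : BF (fun i j : Fin n => b i j) (fun i => (R i : ℤ)) = 2)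
    (hR1 : ∀ i < n, 1 ≤ R i) :
    ∃ p < n, R p = 1 ∧ c = fun i j : Fin (n + 1) => b i j + edgeInd p n i j := by
  obtain ⟨p, hp⟩ := hp
  have h1 := hw (Fin.snoc (α := fun _ => ℕ) (fun i : Fin n => R i) 1) (by
    refine Function.ne_iff.2 ⟨Fin.last n, ?_⟩
    simp)
  have h2 : BF c (fun i => ((Fin.snoc (α := fun _ => ℕ) (fun i : Fin n => R i) 1 i : ℕ) : ℤ)) =
      BF (fun i j : Fin n => b i j) (fun i => (R i : ℤ)) + 2 -
        2 * ∑ i : Fin n, (c i.castSucc (Fin.last n) : ℤ) * R i := by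
    unfold BF
    simp only [Fin.sum_univ_castSucc, Fin.snoc_castSucc, Fin.snoc_last, hbase, hl]
    simp only [fun i : Fin n => hs (Fin.last n) i.castSucc, Finset.sum_add_distrib]
    push_cast
    simp only [mul_one, one_mul]
    ring
  rw [h2, hR] at h1
  have h3 : ∑ i : Fin n, c i.castSucc (Fin.last n) * R i < 2 := by
    zify
    linarith
  have h4 : c p.castSucc (Fin.last n) * R p ≤ ∑ i : Fin n, c i.castSucc (Fin.last n) * R i :=
    Finset.single_le_sum (f := fun i : Fin n => c i.castSucc (Fin.last n) * R i)
      (fun _ _ => Nat.zero_le _) (Finset.mem_univ p)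
  have hRp := hR1 p p.2
  have h5 : c p.castSucc (Fin.last n) * R p ≠ 0 := mul_ne_zero hp (by omega)
  have h6 : c p.castSucc (Fin.last n) * R p = 1 := by omega
  obtain ⟨h7, h8⟩ := mul_eq_one.1 h6
  have h9 : ∀ j : Fin n, j ≠ p → c j.castSucc (Fin.last n) = 0 := by
    intro j hj
    by_contra hne
    have h10 : ∑ i ∈ {j, p}, c i.castSucc (Fin.last n) * R i ≤
        ∑ i : Fin n, c i.castSucc (Fin.last n) * R i :=
      Finset.sum_le_sum_of_subset (Finset.subset_univ _)
    rw [Finset.sum_pair hj] at h10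
    have : c j.castSucc (Fin.last n) * R j ≠ 0 := mul_ne_zero hne (by have := hR1 j j.2; omega)
    omega
  have h11 : ∀ j : Fin n, c j.castSucc (Fin.last n) = if (j : ℕ) = p then 1 else 0 := by
    intro j
    split_ifs with h
    · rw [Fin.ext h, h7]
    · exact h9 j (fun h' => h (congrArg Fin.val h'))
  refine ⟨p, p.2, h8, ?_⟩
  funext i j
  refine Fin.lastCases ?_ (fun i => ?_) i <;> refine Fin.lastCases ?_ (fun j => ?_) j
  · rw [hl]
    have := p.2
    simp [hb n le_rfl, edgeInd]
    omega
  · rw [hs, h11]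
    have := p.2
    have := j.2
    simp only [Fin.val_last, Fin.val_castSucc, hb j this.le, edgeInd]
    grind
  · rw [h11]
    have := p.2
    have := i.2
    simp only [Fin.val_last, Fin.val_castSucc, hb i this.le, edgeInd]
    grind
  · rw [hbase]
    have := i.2
    have := j.2
    simp only [Fin.val_castSucc, edgeInd]
    rw [if_neg (by omega), add_zero]

theorem ext_a (n : ℕ) (hn : 1 ≤ n) (c : Fin (n + 1) → Fin (n + 1) → ℕ)
    (hs : ∀ i j, c i j = c j i) (hl : ∀ i, c i i = 0) (hw : WP c)
    (hbase : ∀ i j : Fin n, c i.castSucc j.castSucc = aCount n i j)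
    (hp : ∃ p : Fin n, c p.castSucc (Fin.last n) ≠ 0) : IsADE c := by
  obtain ⟨m, rfl⟩ : ∃ m, n = m + 1 := ⟨n - 1, by omega⟩
  obtain ⟨p, hp, -, rfl⟩ := attach (m + 1) (segCount m)
    (by intro i hi; simp only [segCount]; constructor <;> rw [if_neg] <;> omega) c hs hl hw
    hbase hp (fun _ => 1) (by
      have := BF_nat (n := m + 1) (segCount m) (fun _ => 1)
      rw [seg_sum _ _ (by omega)] at this
      simp at this
      simp [this]
      ring) (by simp)
  exact br_ade m p (by omega) hw

theorem iso_d0 (m : ℕ) : IsGraphIso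
    (fun i j : Fin (m + 4 + 1) => br (m + 2) 1 i j + edgeInd 0 (m + 4) i j)
    (fun i j : Fin (m + 4 + 1) => br (m + 3) 2 i j) := by
  refine iso_of_fn (m + 5) (fun i j => br (m + 2) 1 i j + edgeInd 0 (m + 4) i j)
    (fun i j => br (m + 3) 2 i j) (fun i => if i = m + 4 then 0 else if i = m + 3 then m + 4 else i + 1) ?_ ?_ ?_
  · intro i hi
    split_ifs <;> omega
  · intro i hi j hj
    grind
  · intro i hi j hj
    simp only [br, segCount, edgeInd]
    grind

theorem iso_d1 (m : ℕ) : IsGraphIso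
    (fun i j : Fin (m + 4 + 1) => br (m + 2) 1 i j + edgeInd (m + 2) (m + 4) i j)
    (fun i j : Fin (m + 4 + 1) => br (m + 3) 1 i j) := by
  refine iso_of_fn (m + 5) (fun i j => br (m + 2) 1 i j + edgeInd (m + 2) (m + 4) i j)
    (fun i j => br (m + 3) 1 i j) (fun i => if i = m + 4 then m + 3 else if i = m + 3 then m + 4 else i) ?_ ?_ ?_
  · intro i hi
    split_ifs <;> omega
  · intro i hi j hj
    grind
  · intro i hi j hj
    simp only [br, segCount, edgeInd]
    grind

theorem iso_d2 (m : ℕ) : IsGraphIso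
    (fun i j : Fin (m + 4 + 1) => br (m + 2) 1 i j + edgeInd (m + 3) (m + 4) i j)
    (fun i j : Fin (m + 4 + 1) => br (m + 2) 1 i j + edgeInd 0 (m + 4) i j) := by
  refine iso_of_fn (m + 5) (fun i j => br (m + 2) 1 i j + edgeInd (m + 3) (m + 4) i j)
    (fun i j => br (m + 2) 1 i j + edgeInd 0 (m + 4) i j) (fun i => if i = 0 then m + 3 else if i = m + 3 then 0 else i) ?_ ?_ ?_
  · intro i hi
    split_ifs <;> omega
  · intro i hi j hj
    grind
  · intro i hi j hj
    simp only [br, segCount, edgeInd]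
    grind (splits := 20)

theorem ext_d (n : ℕ) (hn : 4 ≤ n) (c : Fin (n + 1) → Fin (n + 1) → ℕ)
    (hs : ∀ i j, c i j = c j i) (hl : ∀ i, c i i = 0) (hw : WP c)
    (hbase : ∀ i j : Fin n, c i.castSucc j.castSucc = dCount n i j)
    (hp : ∃ p : Fin n, c p.castSucc (Fin.last n) ≠ 0) : IsADE c := by
  obtain ⟨m, rfl⟩ : ∃ m, n = m + 4 := ⟨n - 4, by omega⟩
  obtain ⟨p, hp, hRp, rfl⟩ := attach (m + 4) (br (m + 2) 1)
    (by intro i hi; simp only [br, segCount, edgeInd]; constructor <;> rw [if_neg, if_neg] <;> omega) c hs hl hw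
    hbase hp (fun i => if i = 0 ∨ i = m + 2 ∨ i = m + 3 then 1 else 2) (by
      have := BF_nat (n := m + 4) (br (m + 2) 1)
        (fun i => ((if i = 0 ∨ i = m + 2 ∨ i = m + 3 then 1 else 2 : ℕ) : ℤ))
      rw [this]
      simp_rw [br, Nat.cast_add, add_mul, Finset.sum_add_distrib]
      rw [seg_sum _ _ (by omega), edge_sum _ _ _ (by omega) (by omega) (by omega)]
      have e2 : ∀ i ∈ Finset.range (m + 1),
        ((if i + 1 = 0 ∨ i + 1 = m + 2 ∨ i + 1 = m + 3 then 1 else 2 : ℕ) : ℤ) = 2 := by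
        intro i hi
        simp at hi
        rw [if_neg (by omega)]
        rfl
      have e3 : ∀ i ∈ Finset.range m,
        ((if i + 1 + 1 = 0 ∨ i + 1 + 1 = m + 2 ∨ i + 1 + 1 = m + 3 then 1 else 2 : ℕ) : ℤ) = 2 := by
        intro i hi
        simp at hi
        rw [if_neg (by omega)]
        rfl
      set R : ℕ → ℤ := fun i => ((if i = 0 ∨ i = m + 2 ∨ i = m + 3 then 1 else 2 : ℕ) : ℤ) with hRdef
      have r0 : R 0 = 1 := by simp [hRdef]
      have r1 : R 1 = 2 := by simp [hRdef]
      have r2 : R (m + 2) = 1 := by simp [hRdef]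
      have r3 : R (m + 3) = 1 := by simp [hRdef]
      have e2' : ∀ i ∈ Finset.range (m + 1), R (i + 1) = 2 := e2
      have e3' : ∀ i ∈ Finset.range m, R (i + 1 + 1) = 2 := e3
      change 2 * ∑ i ∈ Finset.range (m + 4), R i * R i -
        (2 * ∑ i ∈ Finset.range (m + 2), R i * R (i + 1) + 2 * (R 1 * R (m + 3))) = 2
      have s1 : ∑ i ∈ Finset.range (m + 4), R i * R i = 4 * (m + 1) + 3 := by
        rw [Finset.sum_range_succ, Finset.sum_range_succ, Finset.sum_range_succ',
          Finset.sum_congr rfl (g := fun _ => 4) (fun i hi => by rw [e2' i hi]; rfl), r0, r2, r3]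
        simp
        ring
      have s2 : ∑ i ∈ Finset.range (m + 2), R i * R (i + 1) = 4 * m + 4 := by
        rw [Finset.sum_range_succ, Finset.sum_range_succ',
          Finset.sum_congr rfl (g := fun _ => 4) (fun i hi => by
            rw [e3' i hi, e2' i (by simp at *; omega)]; rfl), r0, r2, e2' m (by simp)]
        simp [r1]
        ring
      rw [s1, s2, r1, r3]
      ring) (by intro i _; split_ifs <;> omega)
  have hp3 : p = 0 ∨ p = m + 2 ∨ p = m + 3 := by
    by_contra hcon
    rw [if_neg hcon] at hRp
    omega
  rcases hp3 with rfl | rfl | rfl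
  · exact (br_ade (m + 3) 2 (by omega) (hw.iso (iso_d0 m).sy)).iso (iso_d0 m)
  · exact (br_ade (m + 3) 1 (by omega) (hw.iso (iso_d1 m).sy)).iso (iso_d1 m)
  · have := (iso_d2 m).tr (iso_d0 m)
    exact (br_ade (m + 3) 2 (by omega) (hw.iso this.sy)).iso this


theorem ext_e (n : ℕ) (hn : n = 6 ∨ n = 7 ∨ n = 8) (c : Fin (n + 1) → Fin (n + 1) → ℕ)
    (hs : ∀ i j, c i j = c j i) (hl : ∀ i, c i i = 0) (hw : WP c)
    (hbase : ∀ i j : Fin n, c i.castSucc j.castSucc = eCount n i j)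
    (hp : ∃ p : Fin n, c p.castSucc (Fin.last n) ≠ 0) : IsADE c := by
  rcases hn with rfl | rfl | rfl
  · obtain ⟨p, hp, hRp, rfl⟩ := attach 6 (br 4 2)
      (by decide) c hs hl hw hbase hp (fun i => [1, 2, 3, 2, 1, 2].getD i 0) (by decide) (by decide)
    have hp3 : p = 0 ∨ p = 4 := by
      interval_cases p <;> simp at hRp ⊢
    refine Or.inr (Or.inr ⟨7, by omega, ?_⟩)
    rcases hp3 with rfl | rfl
    · exact iso_of_fn 7 (fun i j => br 4 2 i j + edgeInd 0 6 i j) (br 5 2)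
        (fun i => [4, 3, 2, 1, 0, 6, 5].getD i 0) (by decide) (by decide) (by decide)
    · exact iso_of_fn 7 (fun i j => br 4 2 i j + edgeInd 4 6 i j) (br 5 2)
        (fun i => [0, 1, 2, 3, 4, 6, 5].getD i 0) (by decide) (by decide) (by decide)
  · obtain ⟨p, hp, hRp, rfl⟩ := attach 7 (br 5 2)
      (by decide) c hs hl hw hbase hp (fun i => [2, 3, 4, 3, 2, 1, 2].getD i 0) (by decide) (by decide)
    have hp3 : p = 5 := by
      interval_cases p <;> simp at hRp ⊢
    refine Or.inr (Or.inr ⟨8, by omega, ?_⟩)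
    subst hp3
    exact iso_of_fn 8 (fun i j => br 5 2 i j + edgeInd 5 7 i j) (br 6 2)
        (fun i => [0, 1, 2, 3, 4, 5, 7, 6].getD i 0) (by decide) (by decide) (by decide)
  · obtain ⟨p, hp, hRp, rfl⟩ := attach 8 (br 6 2)
      (by decide) c hs hl hw hbase hp (fun i => [2, 4, 6, 5, 4, 3, 2, 3].getD i 0) (by decide) (by decide)
    exfalso
    interval_cases p <;> simp at hRp

/-- underlying simple graph -/
def sg {α : Type} (c : α → α → ℕ) : SimpleGraph α := SimpleGraph.fromRel fun i j => c i j ≠ 0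

theorem step {α : Type} [Fintype α] (c : α → α → ℕ)
    (hs : ∀ i j, c i j = c j i) (hl : ∀ i, c i i = 0) (hw : WP c) (v : α)
    (hv : ∃ u, c u v ≠ 0) (h : IsADE (fun i j : ({v}ᶜ : Set α) => c i.1 j.1)) : IsADE c := by
  classical
  obtain ⟨u, hu⟩ := hv
  have huv : u ≠ v := by
    rintro rfl
    exact hu (hl u)
  have key : ∀ (n : ℕ) (b : Fin n → Fin n → ℕ) (e : ({v}ᶜ : Set α) ≃ Fin n)
      (_ : ∀ i j : ({v}ᶜ : Set α), c i.1 j.1 = b (e i) (e j)),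
      ∃ c' : Fin (n + 1) → Fin (n + 1) → ℕ, IsGraphIso c c' ∧ (∀ i j, c' i j = c' j i) ∧
      (∀ i, c' i i = 0) ∧ WP c' ∧ (∀ i j : Fin n, c' i.castSucc j.castSucc = b i j) ∧
      ∃ p : Fin n, c' p.castSucc (Fin.last n) ≠ 0 := by
    intro n b e he
    let φ : Fin (n + 1) → α := Fin.snoc (α := fun _ => α) (fun i => (e.symm i).1) v
    have hφ : Function.Bijective φ := by
      constructor
      · intro i j
        refine Fin.lastCases ?_ (fun i => ?_) i <;> refine Fin.lastCases ?_ (fun j => ?_) j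
        · simp
        · intro h
          simp only [φ, Fin.snoc_last, Fin.snoc_castSucc] at h
          exact absurd h.symm (e.symm j).2
        · intro h
          simp only [φ, Fin.snoc_last, Fin.snoc_castSucc] at h
          exact absurd h (e.symm i).2
        · intro h
          simp only [φ, Fin.snoc_castSucc] at h
          rw [e.symm.injective (Subtype.ext h)]
      · intro a
        by_cases ha : a = v
        · exact ⟨Fin.last n, by simp [φ, ha]⟩
        · exact ⟨(e ⟨a, ha⟩).castSucc, by simp [φ]⟩
    have hi : IsGraphIso (fun i j => c (φ i) (φ j)) c := ⟨Equiv.ofBijective φ hφ, fun i j => rfl⟩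
    refine ⟨fun i j => c (φ i) (φ j), hi.sy, fun i j => hs _ _, fun i => hl _, hw.iso hi, ?_, ?_⟩
    · intro i j
      simp only [φ, Fin.snoc_castSucc]
      rw [he]
      simp
    · exact ⟨e ⟨u, huv⟩, by simpa [φ] using hu⟩
  obtain ⟨n, hn, e, he⟩ | ⟨n, hn, e, he⟩ | ⟨n, hn, e, he⟩ := h <;>
    obtain ⟨c', h1, h2, h3, h4, h5, h6⟩ := key n _ e he
  · exact (ext_a n hn c' h2 h3 h4 h5 h6).iso h1
  · exact (ext_d n hn c' h2 h3 h4 h5 h6).iso h1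
  · exact (ext_e n hn c' h2 h3 h4 h5 h6).iso h1

theorem classify (n : ℕ) : ∀ (α : Type) [Fintype α] (c : α → α → ℕ), Fintype.card α = n + 1 →
    (∀ i j, c i j = c j i) → (∀ i, c i i = 0) → WP c → (sg c).Connected → IsADE c := by
  induction n with
  | zero =>
    intro α _ c hcard hs hl hw _
    refine Or.inl ⟨1, le_rfl, Fintype.equivFinOfCardEq hcard, fun i j => ?_⟩
    have : Subsingleton α := Fintype.card_le_one_iff_subsingleton.1 (by omega)
    rw [Subsingleton.elim i j, hl]
    simp [aCount, segCount]
  | succ n ih =>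
    intro α _ c hcard hs hl hw hc
    classical
    have : Nontrivial α := Fintype.one_lt_card_iff_nontrivial.1 (by omega)
    obtain ⟨v, hv⟩ := hc.exists_connected_induce_compl_singleton_of_finite_nontrivial
    apply step c hs hl hw v
    · obtain ⟨u, hu⟩ := hc.preconnected.exists_adj_of_nontrivial v
      simp only [sg, SimpleGraph.fromRel_adj] at hu
      refine ⟨u, ?_⟩
      rw [hs u v, or_self] at hu
      rw [hs u v]
      exact hu.2
    · apply ih
      · rw [Fintype.card_compl_set]
        simp [hcard]
      · exact fun i j => hs _ _
      · exact fun i => hl _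
      · exact hw.pull Subtype.val Subtype.val_injective
      · convert hv using 1
        ext i j
        simp [sg, Subtype.ext_iff]

theorem wp_of_finite {k : Type} [Field k] [IsAlgClosed k] {I E : Type} [Fintype I] [Fintype E]
    (s t : E → I) (h : FiniteRepType k I E s t) : WP (quivCount s t) ∧ ∀ i, quivCount s t i i = 0 := by
  classical
  have : Infinite k := IsAlgClosed.instInfinite
  have hpos := QRep.tits_pos_of_finite h
  have hl : ∀ e, s e ≠ t e := by
    intro e he
    have := hpos (Pi.single (s e) 1) (by simp)
    unfold titsQ at this
    have h1 : ∑ i, ((Pi.single (s e) 1 : I → ℕ) i : ℤ) * ((Pi.single (s e) 1 : I → ℕ) i : ℤ) = 1 := by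
      rw [Finset.sum_eq_single (s e)] <;> simp +contextual [Pi.single_apply]
    have h2 : (1 : ℤ) ≤ ∑ e', ((Pi.single (s e) 1 : I → ℕ) (s e') : ℤ) * ((Pi.single (s e) 1 : I → ℕ) (t e') : ℤ) := by
      refine le_trans ?_ (Finset.single_le_sum (f := fun e' => ((Pi.single (s e) 1 : I → ℕ) (s e') : ℤ) *
        ((Pi.single (s e) 1 : I → ℕ) (t e') : ℤ)) (fun _ _ => by positivity) (Finset.mem_univ e))
      simp [← he]
    omega
  constructor
  · intro x hx
    rw [BF_quiv s t hl]
    have := hpos x hx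
    unfold titsQ at this
    omega
  · intro i
    by_contra hne
    obtain ⟨e, he⟩ := (quivCount_ne s t i i).1 hne
    apply hl e
    rcases he with ⟨h1, h2⟩ | ⟨h1, h2⟩ <;> rw [h1, h2]

theorem sg_connected {α : Type} (c : α → α → ℕ) [Nonempty α]
    (h : ∀ i j, Relation.ReflTransGen (fun a b => c a b ≠ 0) i j) : (sg c).Connected := by
  refine ⟨fun i j => ?_⟩
  have := h i j
  induction this with
  | refl => exact SimpleGraph.Reachable.refl _
  | @tail b d _ hbd ih =>
    by_cases hb : b = d
    · exact hb ▸ ih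
    · refine ih.trans (SimpleGraph.Adj.reachable ?_)
      simp only [sg, SimpleGraph.fromRel_adj]
      exact ⟨hb, Or.inl hbd⟩

theorem ade_of {α : Type} [Fintype α] [Nonempty α] (c : α → α → ℕ)
    (hs : ∀ i j, c i j = c j i) (hl : ∀ i, c i i = 0) (hw : WP c)
    (h : ∀ i j, Relation.ReflTransGen (fun a b => c a b ≠ 0) i j) : IsADE c := by
  have := Fintype.card_pos (α := α)
  exact classify (Fintype.card α - 1) α c (by omega) hs hl hw (sg_connected c h)

theorem disj_of {α : Type} [Fintype α] (c : α → α → ℕ)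
    (hs : ∀ i j, c i j = c j i) (hl : ∀ i, c i i = 0) (hw : WP c) : IsDisjUnionADE c := by
  classical
  let r : α → α → Prop := Relation.ReflTransGen (fun a b => c a b ≠ 0)
  have hsy : ∀ a b, r a b → r b a := by
    intro a b h
    induction h with
    | refl => exact Relation.ReflTransGen.refl
    | @tail b d _ hbd ih =>
      exact Relation.ReflTransGen.head (by rwa [hs d b]) ih
  let S : Setoid α := ⟨r, fun _ => Relation.ReflTransGen.refl, fun h => hsy _ _ h,
    fun h h' => h.trans h'⟩
  refine ⟨Quotient S, fun a => Quotient.mk S a, fun i j hij =>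
    Quotient.sound (Relation.ReflTransGen.single hij), fun q => ?_⟩
  have hne : Nonempty {x : α // Quotient.mk S x = q} := by
    obtain ⟨a, rfl⟩ := Quotient.exists_rep q
    exact ⟨⟨a, rfl⟩⟩
  refine ade_of _ (fun i j => hs _ _) (fun i => hl _) (hw.pull Subtype.val Subtype.val_injective) ?_
  have hgen : ∀ a b, r a b → ∀ (ha : Quotient.mk S a = q) (hb : Quotient.mk S b = q),
      Relation.ReflTransGen (fun x y : {x : α // Quotient.mk S x = q} => c x.1 y.1 ≠ 0)
        ⟨a, ha⟩ ⟨b, hb⟩ := by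
    intro a b hab
    induction hab with
    | refl => intro ha hb; exact Relation.ReflTransGen.refl
    | @tail b d h1 h2 ih =>
      intro ha hd
      have hb : Quotient.mk S b = q := ha ▸ Quotient.sound (hsy _ _ h1)
      exact (ih ha hb).tail h2
  rintro ⟨a, ha⟩ ⟨b, hb⟩
  exact hgen a b (Quotient.exact (ha.trans hb.symm)) ha hb

theorem stmt9 (k : Type) [Field k] [IsAlgClosed k] (I E : Type) [Fintype I] [Fintype E]
    (s t : E → I) :
    (QuivConnected I E s t →
      (FiniteRepType k I E s t ↔ IsADE (quivCount s t))) ∧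
    (FiniteRepType k I E s t ↔ IsDisjUnionADE (quivCount s t)) := by
  have hback : IsDisjUnionADE (quivCount s t) → FiniteRepType k I E s t := fun h =>
    finite_of_coer s t (coer_of_disj h) (noloop_of_disj h)
  refine ⟨fun hc => ⟨fun h => ?_, fun h => hback (disj_of_ade h)⟩, fun h => ?_, hback⟩
  · obtain ⟨hw, hl⟩ := wp_of_finite s t h
    have := hc.1
    refine ade_of _ (quivCount_symm s t) hl hw fun i j => ?_
    have h1 := hc.2 i j
    simpa only [quivCount_ne] using h1
  · obtain ⟨hw, hl⟩ := wp_of_finite s t h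
    exact disj_of _ (quivCount_symm s t) hl hw
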